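/- arXiv:1507.02176 — 3 statements merged into one kernel-verified Lean document; each statement's English description precedes it below -/
import Mathlib

section
/- Under assumptions (H1)–(H3), given a bounded set B ⊆ ℝ^N × ℝ^M and S > 0, there exists a bounded set B0 ⊇ B such that for every (x,y) ∈ B and every ε > 0 one can find a control α and a trajectory (ξ,η) of (CD_ε) with (ξ(0),η(0)) = (x,y) satisfying (ξ(t), η(t)) ∈ B0 for all t ∈ [0, S/ε]. -/
open Set MeasureTheory Metric Filter
open scoped RealInnerProductSpace Topology

noncomputable section

/-- `ℝ^n` with the Euclidean structure. -/
abbrev Euc (n : ℕ) : Type := EuclideanSpace ℝ (Fin n)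

/-- A control: a measurable map with values in the control set `A`. -/
def IsControl {k : ℕ} (A : Set (Euc k)) (α : ℝ → Euc k) : Prop :=
  Measurable α ∧ ∀ t, α t ∈ A

/-- `(ξ, η)` is a trajectory of the controlled dynamics `(CD_ε)` for the control `α`:
this is the integral form, equivalent to `(ξ, η)` being locally absolutely continuous
with `ξ' = ε f(ξ, η, α)` and `η' = g(ξ, η, α)` a.e. on `[0, ∞)`. -/
def IsTrajectory {N M k : ℕ}
    (f : Euc N → Euc M → Euc k → Euc N) (g : Euc N → Euc M → Euc k → Euc M)
    (ε : ℝ) (α : ℝ → Euc k) (ξ : ℝ → Euc N) (η : ℝ → Euc M) : Prop :=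
  (∀ t, 0 ≤ t → IntervalIntegrable (fun s => f (ξ s) (η s) (α s)) volume 0 t) ∧
  (∀ t, 0 ≤ t → IntervalIntegrable (fun s => g (ξ s) (η s) (α s)) volume 0 t) ∧
  (∀ t, 0 ≤ t → ξ t = ξ 0 + ε • ∫ s in (0:ℝ)..t, f (ξ s) (η s) (α s)) ∧
  (∀ t, 0 ≤ t → η t = η 0 + ∫ s in (0:ℝ)..t, g (ξ s) (η s) (α s))

/-- The value function `V^ε(x, y, t)` of the singularly perturbed optimal control problem. -/
def valueFun {N M k : ℕ} (A : Set (Euc k))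
    (f : Euc N → Euc M → Euc k → Euc N) (g : Euc N → Euc M → Euc k → Euc M)
    (ℓ : Euc N → Euc M → Euc k → ℝ) (u0 : Euc N → Euc M → ℝ)
    (ε : ℝ) (x : Euc N) (y : Euc M) (t : ℝ) : ℝ :=
  sInf { v : ℝ | ∃ (α : ℝ → Euc k) (ξ : ℝ → Euc N) (η : ℝ → Euc M),
    IsControl A α ∧ IsTrajectory f g ε α ξ η ∧ ξ 0 = x ∧ η 0 = y ∧
    IntervalIntegrable (fun s => ℓ (ξ s) (η s) (α s)) volume 0 (t / ε) ∧
    v = ε * (∫ s in (0:ℝ)..(t / ε), ℓ (ξ s) (η s) (α s)) + u0 (ξ (t / ε)) (η (t / ε)) }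

/-- The Hamiltonian `H(x,y,p,q) = max_{a ∈ A} { -p·f(x,y,a) - q·g(x,y,a) - ℓ(x,y,a) }`. -/
def Ham {N M k : ℕ} (A : Set (Euc k))
    (f : Euc N → Euc M → Euc k → Euc N) (g : Euc N → Euc M → Euc k → Euc M)
    (ℓ : Euc N → Euc M → Euc k → ℝ)
    (x : Euc N) (y : Euc M) (p : Euc N) (q : Euc M) : ℝ :=
  sSup ((fun a => -⟪p, f x y a⟫ - ⟪q, g x y a⟫ - ℓ x y a) '' A)

/-- Viscosity subsolution of the stationary equation `G(y, Du) = b` on `Ω`. -/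
def IsVSubOn {m : ℕ} (G : Euc m → Euc m → ℝ) (b : ℝ) (Ω : Set (Euc m)) (u : Euc m → ℝ) : Prop :=
  UpperSemicontinuousOn u Ω ∧
  ∀ ψ : Euc m → ℝ, ContDiff ℝ 1 ψ → ∀ y ∈ Ω,
    IsLocalMaxOn (fun z => u z - ψ z) Ω y → G y (gradient ψ y) ≤ b

/-- Viscosity supersolution of the stationary equation `G(y, Du) = b` on `Ω`. -/
def IsVSupOn {m : ℕ} (G : Euc m → Euc m → ℝ) (b : ℝ) (Ω : Set (Euc m)) (u : Euc m → ℝ) : Prop :=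
  LowerSemicontinuousOn u Ω ∧
  ∀ ψ : Euc m → ℝ, ContDiff ℝ 1 ψ → ∀ y ∈ Ω,
    IsLocalMinOn (fun z => u z - ψ z) Ω y → b ≤ G y (gradient ψ y)

/-- The set of levels `b` for which `F(y, Du) = b` has a viscosity subsolution on `ℝ^m`. -/
def subsolLevels {m : ℕ} (F : Euc m → Euc m → ℝ) : Set ℝ :=
  { b : ℝ | ∃ u : Euc m → ℝ, IsVSubOn F b univ u }

/-- The critical value of a Hamiltonian `F` on `ℝ^m`. -/
def critVal {m : ℕ} (F : Euc m → Euc m → ℝ) : ℝ :=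
  sInf (subsolLevels F)

/-- The effective Hamiltonian `H̄(x, p)`. -/
def effH {N M k : ℕ} (A : Set (Euc k))
    (f : Euc N → Euc M → Euc k → Euc N) (g : Euc N → Euc M → Euc k → Euc M)
    (ℓ : Euc N → Euc M → Euc k → ℝ) (x : Euc N) (p : Euc N) : ℝ :=
  critVal (fun (y q : Euc M) => Ham A f g ℓ x y p q)

/-- The frozen Hamiltonian `H₀(y, q) = H(x₀, y, p₀, q)` of the cell problem. -/
def cellH {N M k : ℕ} (A : Set (Euc k))
    (f : Euc N → Euc M → Euc k → Euc N) (g : Euc N → Euc M → Euc k → Euc M)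
    (ℓ : Euc N → Euc M → Euc k → ℝ) (x0 p0 : Euc N) : Euc M → Euc M → ℝ :=
  fun y q => Ham A f g ℓ x0 y p0 q

/-- Viscosity subsolution of `u_t + G(x, D_x u) = 0` on `Ω ⊆ ℝ^n × ℝ`. -/
def IsParabSubOn {n : ℕ} (G : Euc n → Euc n → ℝ) (Ω : Set (Euc n × ℝ)) (u : Euc n × ℝ → ℝ) : Prop :=
  UpperSemicontinuousOn u Ω ∧
  ∀ ψ : Euc n × ℝ → ℝ, ContDiff ℝ 1 ψ → ∀ z ∈ Ω,
    IsLocalMaxOn (fun w => u w - ψ w) Ω z →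
    deriv (fun s => ψ (z.1, s)) z.2 + G z.1 (gradient (fun x => ψ (x, z.2)) z.1) ≤ 0

/-- Viscosity supersolution of `u_t + G(x, D_x u) = 0` on `Ω ⊆ ℝ^n × ℝ`. -/
def IsParabSupOn {n : ℕ} (G : Euc n → Euc n → ℝ) (Ω : Set (Euc n × ℝ)) (u : Euc n × ℝ → ℝ) : Prop :=
  LowerSemicontinuousOn u Ω ∧
  ∀ ψ : Euc n × ℝ → ℝ, ContDiff ℝ 1 ψ → ∀ z ∈ Ω,
    IsLocalMinOn (fun w => u w - ψ w) Ω z →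
    0 ≤ deriv (fun s => ψ (z.1, s)) z.2 + G z.1 (gradient (fun x => ψ (x, z.2)) z.1)

/-- Viscosity subsolution of `u_t + H(x, y, D_x u, D_y u / ε) = 0` on `Ω ⊆ (ℝ^N × ℝ^M) × ℝ`. -/
def IsHJSubOn {N M : ℕ} (Hm : Euc N → Euc M → Euc N → Euc M → ℝ) (ε : ℝ)
    (Ω : Set ((Euc N × Euc M) × ℝ)) (u : (Euc N × Euc M) × ℝ → ℝ) : Prop :=
  UpperSemicontinuousOn u Ω ∧
  ∀ ψ : (Euc N × Euc M) × ℝ → ℝ, ContDiff ℝ 1 ψ → ∀ z ∈ Ω,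
    IsLocalMaxOn (fun w => u w - ψ w) Ω z →
    deriv (fun s => ψ (z.1, s)) z.2 +
      Hm z.1.1 z.1.2 (gradient (fun x => ψ ((x, z.1.2), z.2)) z.1.1)
        (ε⁻¹ • gradient (fun y => ψ ((z.1.1, y), z.2)) z.1.2) ≤ 0

/-- Viscosity supersolution of `u_t + H(x, y, D_x u, D_y u / ε) = 0` on `Ω`. -/
def IsHJSupOn {N M : ℕ} (Hm : Euc N → Euc M → Euc N → Euc M → ℝ) (ε : ℝ)
    (Ω : Set ((Euc N × Euc M) × ℝ)) (u : (Euc N × Euc M) × ℝ → ℝ) : Prop :=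
  LowerSemicontinuousOn u Ω ∧
  ∀ ψ : (Euc N × Euc M) × ℝ → ℝ, ContDiff ℝ 1 ψ → ∀ z ∈ Ω,
    IsLocalMinOn (fun w => u w - ψ w) Ω z →
    0 ≤ deriv (fun s => ψ (z.1, s)) z.2 +
      Hm z.1.1 z.1.2 (gradient (fun x => ψ ((x, z.1.2), z.2)) z.1.1)
        (ε⁻¹ • gradient (fun y => ψ ((z.1.1, y), z.2)) z.1.2)

/-- The upper weak semilimit `(limsup^# V^ε)(z)`. -/
def upperLim {Z : Type*} [TopologicalSpace Z] (V : ℝ → Z → ℝ) (z : Z) : ℝ :=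
  sSup { l : ℝ | ∃ (e : ℕ → ℝ) (w : ℕ → Z), (∀ n, 0 < e n) ∧
    Tendsto e atTop (𝓝 0) ∧ Tendsto w atTop (𝓝 z) ∧
    l = Filter.limsup (fun n => V (e n) (w n)) atTop }

/-- The lower weak semilimit `(liminf_# V^ε)(z)`. -/
def lowerLim {Z : Type*} [TopologicalSpace Z] (V : ℝ → Z → ℝ) (z : Z) : ℝ :=
  sInf { l : ℝ | ∃ (e : ℕ → ℝ) (w : ℕ → Z), (∀ n, 0 < e n) ∧
    Tendsto e atTop (𝓝 0) ∧ Tendsto w atTop (𝓝 z) ∧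
    l = Filter.liminf (fun n => V (e n) (w n)) atTop }

/-- The lower semicontinuous envelope `φ_#`. -/
def lscEnvelope {X : Type*} [TopologicalSpace X] (φ : X → ℝ) (x : X) : ℝ :=
  Filter.liminf φ (𝓝 x)

/-- Local equiboundedness of the family of value functions. -/
def LocEquibounded {N M : ℕ} (V : ℝ → Euc N → Euc M → ℝ → ℝ) : Prop :=
  ∀ C : Set (Euc N × Euc M × ℝ), Bornology.IsBounded C →
    ∃ Mb : ℝ, ∀ ε : ℝ, 0 < ε → ∀ z ∈ C, 0 ≤ z.2.2 → |V ε z.1 z.2.1 z.2.2| ≤ Mb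

/-- The sublevel set `Z_b(y)` of a Hamiltonian. -/
def sublevel {m : ℕ} (G : Euc m → Euc m → ℝ) (b : ℝ) (y : Euc m) : Set (Euc m) :=
  { q | G y q ≤ b }

/-- The support function `σ_b(y, v)` of the sublevel `Z_b(y)`. -/
def suppFn {m : ℕ} (G : Euc m → Euc m → ℝ) (b : ℝ) (y v : Euc m) : ℝ :=
  sSup ((fun q => ⟪q, v⟫) '' sublevel G b y)

/-- The intrinsic length of a curve (Lipschitz curves are differentiable a.e.). -/
def intrinsicLen {m : ℕ} (G : Euc m → Euc m → ℝ) (b : ℝ) (ξ : ℝ → Euc m) : ℝ :=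
  ∫ s in (0:ℝ)..1, suppFn G b (ξ s) (deriv ξ s)

/-- Admissible (Lipschitz) curves on `[0,1]` joining `y₁` to `y₂`. -/
def IsAdmCurve {m : ℕ} (ξ : ℝ → Euc m) (y₁ y₂ : Euc m) : Prop :=
  (∃ Kl : NNReal, LipschitzWith Kl ξ) ∧ ξ 0 = y₁ ∧ ξ 1 = y₂

/-- The intrinsic distance `S_b(y₁, y₂)`. -/
def intrinsicDist {m : ℕ} (G : Euc m → Euc m → ℝ) (b : ℝ) (y₁ y₂ : Euc m) : ℝ :=
  sInf { L : ℝ | ∃ ξ : ℝ → Euc m, IsAdmCurve ξ y₁ y₂ ∧ L = intrinsicLen G b ξ }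

/-- The weighted intrinsic length associated with a weight `h`. -/
def wIntrinsicLen {m : ℕ} (G : Euc m → Euc m → ℝ) (b : ℝ) (h : Euc m → ℝ) (ξ : ℝ → Euc m) : ℝ :=
  ∫ s in (0:ℝ)..1, h (ξ s) * suppFn G b (ξ s) (deriv ξ s)

/-- The weighted intrinsic distance `S_b^h(y₁, y₂)`. -/
def wIntrinsicDist {m : ℕ} (G : Euc m → Euc m → ℝ) (b : ℝ) (h : Euc m → ℝ) (y₁ y₂ : Euc m) : ℝ :=
  sInf { L : ℝ | ∃ ξ : ℝ → Euc m, IsAdmCurve ξ y₁ y₂ ∧ L = wIntrinsicLen G b h ξ }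

/-- The intrinsic critical distance `S(y₁, y₂)` of the cell problem at `(x₀, p₀)`. -/
def cellS {N M k : ℕ} (A : Set (Euc k))
    (f : Euc N → Euc M → Euc k → Euc N) (g : Euc N → Euc M → Euc k → Euc M)
    (ℓ : Euc N → Euc M → Euc k → ℝ) (x0 p0 : Euc N) (y₁ y₂ : Euc M) : ℝ :=
  intrinsicDist (cellH A f g ℓ x0 p0) (effH A f g ℓ x0 p0) y₁ y₂

/-- The Aubry set of `G` at the level `c`: points near which no global viscosity
subsolution of `G(y, Du) = c` is strict. -/
def AubrySet {m : ℕ} (G : Euc m → Euc m → ℝ) (c : ℝ) : Set (Euc m) :=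
  { y₀ | ¬ ∃ (u : Euc m → ℝ) (δ : ℝ) (U : Set (Euc m)),
      IsVSubOn G c univ u ∧ 0 < δ ∧ IsOpen U ∧ y₀ ∈ U ∧ IsVSubOn G (c - δ) U u }

end

section Helpers

/-- Short-time solutions of an autonomous Lipschitz ODE, in integral form. -/
theorem step_exists {E : Type*} [NormedAddCommGroup E] [NormedSpace ℝ E] [CompleteSpace E]
    (v : E → E) (K : NNReal) (hv : LipschitzWith K v) (τ : ℝ) (hτ : 0 < τ)
    (hK : (K : ℝ) * τ ≤ 1 / 2) (z : E) :
    ∃ φ : ℝ → E, Continuous φ ∧ φ 0 = z ∧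
      (∀ t ∈ Icc 0 τ, φ t = z + ∫ s in (0:ℝ)..t, v (φ s)) ∧
      ∀ t, φ t ∈ closedBall z (2 * τ * ‖v z‖) := by
  have h0 : (0:ℝ) ∈ Icc 0 τ := ⟨le_rfl, hτ.le⟩
  have ha : 0 ≤ 2 * τ * ‖v z‖ := by positivity
  have hL : 0 ≤ 2 * ‖v z‖ := by positivity
  have hP : IsPicardLindelof (fun _ => v) (⟨0, h0⟩ : Icc 0 τ) z
      (NNReal.mk (2 * τ * ‖v z‖) ha) 0 (NNReal.mk (2 * ‖v z‖) hL) K := by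
    apply IsPicardLindelof.of_time_independent
    · intro x hx
      have hx' : dist x z ≤ 2 * τ * ‖v z‖ := mem_closedBall.mp hx
      have h1 : dist (v x) (v z) ≤ K * dist x z := hv.dist_le_mul x z
      have h2 : ‖v x‖ ≤ ‖v z‖ + dist (v x) (v z) := by
        rw [dist_eq_norm]
        have := norm_add_le (v z) (v x - v z)
        simpa using this
      have h3 : (K:ℝ) * dist x z ≤ K * (2 * τ * ‖v z‖) := by gcongr
      have h4 : (K:ℝ) * τ * ‖v z‖ ≤ 1 / 2 * ‖v z‖ := by gcongr
      change ‖v x‖ ≤ 2 * ‖v z‖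
      nlinarith
    · exact hv.lipschitzOnWith
    · have hmax : max (τ - (0:ℝ)) ((0:ℝ) - 0) = τ := by simp [hτ.le]
      change 2 * ‖v z‖ * max (τ - (0:ℝ)) ((0:ℝ) - 0) ≤ 2 * τ * ‖v z‖ - 0
      rw [hmax]; nlinarith
  have hz : z ∈ closedBall z ((0:NNReal):ℝ) := by simp
  obtain ⟨β, hβ⟩ := ODE.FunSpace.exists_isFixedPt_next hP hz
  replace hβ := (ODE.FunSpace.isFixedPt_next_iff hP hz).mp hβ
  have hint : ∀ t ∈ Icc 0 τ, β.compProj t = z + ∫ s in (0:ℝ)..t, v (β.compProj s) := by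
    intro t ht
    rw [ODE.FunSpace.compProj_of_mem ht, hβ ⟨t, ht⟩, ODE.picard_apply]
  refine ⟨β.compProj, β.continuous_compProj, ?_, hint, ?_⟩
  · simpa using hint 0 h0
  · intro t
    exact ODE.FunSpace.compProj_mem_closedBall β hP.mul_max_le

/-- Concatenation of the short-time pieces. -/
theorem concat_traj {E C : Type*} [NormedAddCommGroup E] [NormedSpace ℝ E] [CompleteSpace E]
    (F : E → C → E) (τ : ℝ) (hτ : 0 < τ) (u : ℕ → E) (a : ℕ → C) (φ : ℕ → ℝ → E)
    (hF : ∀ n, Continuous fun s => F (φ n s) (a n))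
    (h0 : ∀ n, φ n 0 = u n) (h1 : ∀ n, φ n τ = u (n + 1))
    (hφ : ∀ n, ∀ t ∈ Icc 0 τ, φ n t = u n + ∫ s in (0:ℝ)..t, F (φ n s) (a n))
    (w : ℝ → E) (α : ℝ → C)
    (hw : ∀ n : ℕ, ∀ s, 0 ≤ s → s < τ → w (n * τ + s) = φ n s)
    (hα : ∀ n : ℕ, ∀ s, 0 ≤ s → s < τ → α (n * τ + s) = a n) :
    ∀ t, 0 ≤ t → IntervalIntegrable (fun s => F (w s) (α s)) volume 0 t ∧
      w t = w 0 + ∫ s in (0:ℝ)..t, F (w s) (α s) := by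
  have hw0 : ∀ n : ℕ, w (n * τ) = u n := by
    intro n
    have := hw n 0 le_rfl hτ
    rw [add_zero] at this
    rw [this, h0]
  have hw' : ∀ n : ℕ, ∀ s ∈ Icc 0 τ, w (n * τ + s) = φ n s := by
    intro n s hs
    rcases lt_or_eq_of_le hs.2 with h | h
    · exact hw n s hs.1 h
    · subst h
      rw [h1, ← hw0 (n + 1)]
      congr 1
      push_cast; ring
  -- one piece
  have piece : ∀ n : ℕ, ∀ s ∈ Icc 0 τ,
      IntervalIntegrable (fun r => F (w r) (α r)) volume (n * τ) (n * τ + s) ∧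
      w (n * τ + s) = w (n * τ) + ∫ r in (n * τ : ℝ)..(n * τ + s), F (w r) (α r) := by
    intro n s hs
    have hle : (n * τ : ℝ) ≤ n * τ + s := by linarith [hs.1]
    have heq : ∀ r ∈ Ioo (n * τ : ℝ) (n * τ + s),
        F (φ n (r - n * τ)) (a n) = F (w r) (α r) := by
      intro r hr
      have e : r = n * τ + (r - n * τ) := by ring
      have e1 := hw n (r - n * τ) (by linarith [hr.1]) (by linarith [hr.2, hs.2])
      have e2 := hα n (r - n * τ) (by linarith [hr.1]) (by linarith [hr.2, hs.2])
      rw [← e] at e1 e2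
      rw [e1, e2]
    have hc : Continuous fun r => F (φ n (r - n * τ)) (a n) :=
      (hF n).comp (continuous_id.sub continuous_const)
    constructor
    · refine (hc.intervalIntegrable _ _).congr_uIoo ?_
      rw [uIoo_of_le hle]
      exact heq
    · rw [← intervalIntegral.integral_congr_Ioo_of_le hle heq,
        intervalIntegral.integral_comp_sub_right (fun r => F (φ n r) (a n)), hw' n s hs, hw0,
        hφ n s hs]
      simp
  have grid : ∀ n : ℕ, IntervalIntegrable (fun s => F (w s) (α s)) volume 0 (n * τ) ∧
      w (n * τ) = w 0 + ∫ s in (0:ℝ)..(n * τ), F (w s) (α s) := by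
    intro n
    induction n with
    | zero => simp
    | succ n ih =>
      have hp := piece n τ ⟨hτ.le, le_rfl⟩
      have e : ((n + 1 : ℕ) : ℝ) * τ = n * τ + τ := by push_cast; ring
      rw [e]
      refine ⟨ih.1.trans hp.1, ?_⟩
      rw [hp.2, ih.2, add_assoc, intervalIntegral.integral_add_adjacent_intervals ih.1 hp.1]
  intro t ht
  have hfl := Nat.floor_le (div_nonneg ht hτ.le)
  have hfl2 := Nat.lt_floor_add_one (t / τ)
  set n := ⌊t / τ⌋₊
  rw [le_div_iff₀ hτ] at hfl
  rw [div_lt_iff₀ hτ] at hfl2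
  have hp := piece n (t - n * τ) ⟨by linarith, by linarith⟩
  have e : n * τ + (t - n * τ) = t := by ring
  rw [e] at hp
  refine ⟨(grid n).1.trans hp.1, ?_⟩
  rw [hp.2, (grid n).2, add_assoc, intervalIntegral.integral_add_adjacent_intervals (grid n).1 hp.1]

/-- A control pushing inwards exists wherever the velocities surround the origin. -/
theorem exists_inward {M : ℕ} {C : Type*} (A : Set C) (h : C → Euc M) (y : Euc M) (hy : y ≠ 0)
    (r : ℝ) (hr : 0 < r)
    (hb : Metric.ball (0 : Euc M) r ⊆ closure (convexHull ℝ (h '' A))) :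
    ∃ a ∈ A, ⟪y, h a⟫ < 0 := by
  by_contra hcon
  push Not at hcon
  have hsub : closure (convexHull ℝ (h '' A)) ⊆ {v : Euc M | 0 ≤ ⟪y, v⟫} := by
    apply closure_minimal
    · apply convexHull_min
      · rintro _ ⟨a, ha, rfl⟩
        exact hcon a ha
      · exact convex_halfSpace_ge ⟨fun a b => inner_add_right _ _ _,
          fun c a => by simp [inner_smul_right]⟩ 0
    · exact isClosed_le continuous_const (by fun_prop)
  have hy' : 0 < ‖y‖ := norm_pos_iff.mpr hy
  have hmem : (-(r / (2 * ‖y‖))) • y ∈ Metric.ball (0 : Euc M) r := by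
    rw [mem_ball_zero_iff, norm_smul, norm_neg, Real.norm_of_nonneg (by positivity)]
    have : r / (2 * ‖y‖) * ‖y‖ = r / 2 := by field_simp
    linarith
  have := hsub (hb hmem)
  simp only [mem_ofPred_eq, inner_smul_right, real_inner_self_eq_norm_sq] at this
  have h2 : 0 < r / (2 * ‖y‖) * ‖y‖ ^ 2 := by positivity
  linarith

/-- Finitely many controls with a uniform radius. -/
theorem finite_controls {N M k : ℕ} (A : Set (Euc k)) (hAne : A.Nonempty)
    (g : Euc N → Euc M → Euc k → Euc M)
    (hg : ∀ a ∈ A, Continuous fun z : Euc N × Euc M => g z.1 z.2 a)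
    (K : Set (Euc N × Euc M)) (hK : IsCompact K)
    (hin : ∀ z ∈ K, ∃ a ∈ A, ⟪z.2, g z.1 z.2 a⟫ < 0) :
    ∃ (C δ : ℝ), 0 < C ∧ 0 < δ ∧ ∀ z : Euc N × Euc M, ∃ a ∈ A, ‖g 0 0 a‖ ≤ C ∧
      (z ∈ K → ∀ z' ∈ ball z δ, ⟪z'.2, g z'.1 z'.2 a⟫ < 0) := by
  classical
  obtain ⟨a0, ha0⟩ := hAne
  let U : A → Set (Euc N × Euc M) := fun a => {z | ⟪z.2, g z.1 z.2 a⟫ < 0}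
  have hU : ∀ a, IsOpen (U a) := by
    intro a
    have := hg a a.2
    exact isOpen_lt (by fun_prop) continuous_const
  have hcov : K ⊆ ⋃ a, U a := by
    intro z hz
    obtain ⟨a, ha, h⟩ := hin z hz
    exact mem_iUnion.mpr ⟨⟨a, ha⟩, h⟩
  obtain ⟨T, hT⟩ := hK.elim_finite_subcover U hU hcov
  obtain ⟨δ, hδ, hleb⟩ := lebesgue_number_lemma_of_metric (c := fun a : T => U a.1) hK
    (fun a => hU a.1) (by
      intro z hz
      obtain ⟨a, ha, h⟩ := mem_iUnion₂.mp (hT hz)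
      exact mem_iUnion.mpr ⟨⟨a, ha⟩, h⟩)
  refine ⟨‖g 0 0 a0‖ + ∑ a ∈ T, ‖g 0 0 a‖ + 1, δ, by positivity, hδ, fun z => ?_⟩
  by_cases hz : z ∈ K
  · obtain ⟨a, ha⟩ := hleb z hz
    refine ⟨a.1.1, a.1.2, ?_, fun _ z' hz' => ha hz'⟩
    have := Finset.single_le_sum (f := fun a : A => ‖g 0 0 a‖) (fun _ _ => norm_nonneg _) a.2
    have h2 := norm_nonneg (g 0 0 a0)
    linarith
  · refine ⟨a0, ha0, ?_, fun h => absurd h hz⟩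
    have : 0 ≤ ∑ a ∈ T, ‖g 0 0 a‖ := by positivity
    linarith

/-- If the velocity points inwards along the curve, the norm does not increase. -/
theorem norm_le_of_inward {M : ℕ} (η η' : ℝ → Euc M) (τ : ℝ) (y : Euc M)
    (hη' : Continuous η') (hη : ∀ t ∈ Icc 0 τ, η t = y + ∫ s in (0:ℝ)..t, η' s)
    (hin : ∀ t ∈ Icc 0 τ, ⟪η t, η' t⟫ ≤ 0) : ∀ t ∈ Icc 0 τ, ‖η t‖ ≤ ‖y‖ := by
  intro t ht
  let ζ : ℝ → Euc M := fun t => y + ∫ s in (0:ℝ)..t, η' s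
  have hζ : ∀ t, HasDerivAt ζ (η' t) t := fun t =>
    (hη'.integral_hasStrictDerivAt 0 t).hasDerivAt.const_add y
  have hanti : AntitoneOn (fun t => ‖ζ t‖ ^ 2) (Icc 0 τ) := by
    refine antitoneOn_of_hasDerivWithinAt_nonpos (f' := fun t => 2 * ⟪ζ t, η' t⟫) (convex_Icc _ _) ?_ ?_ ?_
    · intro s _
      exact ((hζ s).continuousAt.norm.pow 2).continuousWithinAt
    · intro s _
      exact (hζ s).hasDerivWithinAt.norm_sq
    · intro s hs
      have hs' := interior_subset hs
      have := hin s hs'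
      rw [hη s hs'] at this
      change 2 * ⟪ζ s, η' s⟫ ≤ 0
      change ⟪ζ s, η' s⟫ ≤ 0 at this
      linarith
  have h := hanti ⟨le_rfl, ht.1.trans ht.2⟩ ht ht.1
  have e0 : ζ 0 = y := by simp [ζ]
  have et : ζ t = η t := (hη t ht).symm
  simp only [e0, et] at h
  exact (sq_le_sq₀ (norm_nonneg _) (norm_nonneg _)).mp h

end Helpers

theorem statement4
    {N M k : ℕ} (A : Set (Euc k)) (hA : IsCompact A) (hAne : A.Nonempty)
    (f : Euc N → Euc M → Euc k → Euc N) (g : Euc N → Euc M → Euc k → Euc M)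
    (L0 Q0 : ℝ) (hL0 : 0 < L0) (hQ0 : 0 < Q0)
    (hfLip : ∀ (x₁ x₂ : Euc N) (y₁ y₂ : Euc M), ∀ a ∈ A,
      ‖f x₁ y₁ a - f x₂ y₂ a‖ ≤ L0 * (‖x₁ - x₂‖ + ‖y₁ - y₂‖))
    (hgLip : ∀ (x₁ x₂ : Euc N) (y₁ y₂ : Euc M), ∀ a ∈ A,
      ‖g x₁ y₁ a - g x₂ y₂ a‖ ≤ L0 * (‖x₁ - x₂‖ + ‖y₁ - y₂‖))
    (hfBdd : ∀ x y, ∀ a ∈ A, ‖f x y a‖ ≤ Q0)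
    (hctrl : ∀ K : Set (Euc N × Euc M), IsCompact K → ∃ r > 0, ∀ z ∈ K,
      Metric.ball (0 : Euc M) r ⊆ closure (convexHull ℝ ((fun a => g z.1 z.2 a) '' A)))
 :
    ∀ B : Set (Euc N × Euc M), Bornology.IsBounded B → ∀ S : ℝ, 0 < S →
      ∃ B0 : Set (Euc N × Euc M), Bornology.IsBounded B0 ∧ B ⊆ B0 ∧
        ∀ z ∈ B, ∀ ε : ℝ, 0 < ε →
          ∃ (α : ℝ → Euc k) (ξ : ℝ → Euc N) (η : ℝ → Euc M),
            IsControl A α ∧ IsTrajectory f g ε α ξ η ∧ ξ 0 = z.1 ∧ η 0 = z.2 ∧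
            ∀ t, 0 ≤ t → t ≤ S / ε → (ξ t, η t) ∈ B0 := by
  intro B hB S hS
  obtain ⟨ρ, hρ, hBρ⟩ := hB.exists_pos_norm_le
  set R : ℝ := ρ + 1 with hR
  set Rx : ℝ := ρ + Q0 * S with hRx
  have hRxpos : 0 < Rx := by positivity
  have hRpos : 0 < R := by positivity
  let K : Set (Euc N × Euc M) := closedBall 0 Rx ×ˢ (closedBall 0 (R + 1) \ ball 0 R)
  have hKc : IsCompact K :=
    (isCompact_closedBall _ _).prod ((isCompact_closedBall _ _).diff isOpen_ball)
  obtain ⟨r, hr, hball⟩ := hctrl K hKc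
  -- global Lipschitz estimates
  have hgK : ∀ a ∈ A, Continuous fun z : Euc N × Euc M => g z.1 z.2 a := by
    intro a ha
    refine (LipschitzWith.of_dist_le_mul (K := ⟨2 * L0, by positivity⟩) fun z z' => ?_).continuous
    rw [dist_eq_norm]
    refine (hgLip _ _ _ _ a ha).trans ?_
    have h1 : ‖z.1 - z'.1‖ ≤ dist z z' := by rw [dist_eq_norm]; exact norm_fst_le (z - z')
    have h2 : ‖z.2 - z'.2‖ ≤ dist z z' := by rw [dist_eq_norm]; exact norm_snd_le (z - z')
    change _ ≤ 2 * L0 * dist z z'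
    nlinarith
  obtain ⟨C, δ, hC, hδ, hsel⟩ := finite_controls A hAne g hgK K hKc (by
    intro z hz
    refine exists_inward A (fun a => g z.1 z.2 a) z.2 ?_ r hr (hball z hz)
    intro h0
    have := hz.2.2
    rw [h0] at this
    exact this (mem_ball_self hRpos))
  choose sel hselA hselC hselK using hsel
  refine ⟨closedBall 0 Rx ×ˢ closedBall 0 (R + 1),
    isBounded_closedBall.prod isBounded_closedBall, ?_, ?_⟩
  · intro z hz
    have h := hBρ z hz
    have h1 := norm_fst_le z
    have h2 := norm_snd_le z
    have : 0 < Q0 * S := by positivity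
    refine ⟨mem_closedBall_zero_iff.mpr (by linarith), mem_closedBall_zero_iff.mpr (by linarith)⟩
  intro z hz ε hε
  -- the vector field
  let F : Euc N × Euc M → Euc k → Euc N × Euc M := fun w a => (ε • f w.1 w.2 a, g w.1 w.2 a)
  have hKpos : 0 ≤ 2 * L0 * (ε + 1) := by positivity
  let KK : NNReal := ⟨2 * L0 * (ε + 1), hKpos⟩
  have hFLip : ∀ a ∈ A, LipschitzWith KK fun w => F w a := by
    intro a ha
    refine LipschitzWith.of_dist_le_mul fun w w' => ?_
    have h1 : ‖w.1 - w'.1‖ ≤ dist w w' := by rw [dist_eq_norm]; exact norm_fst_le (w - w')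
    have h2 : ‖w.2 - w'.2‖ ≤ dist w w' := by rw [dist_eq_norm]; exact norm_snd_le (w - w')
    have h3 : L0 * (‖w.1 - w'.1‖ + ‖w.2 - w'.2‖) ≤ 2 * L0 * dist w w' := by nlinarith
    have hd : 0 ≤ 2 * L0 * dist w w' := by positivity
    change dist (F w a) (F w' a) ≤ 2 * L0 * (ε + 1) * dist w w'
    rw [Prod.dist_eq]
    refine max_le ?_ ?_
    · change dist (ε • f w.1 w.2 a) (ε • f w'.1 w'.2 a) ≤ _
      rw [dist_eq_norm, ← smul_sub, norm_smul, Real.norm_of_nonneg hε.le]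
      have h4 := (hfLip w.1 w'.1 w.2 w'.2 a ha).trans h3
      have h5 := mul_le_mul_of_nonneg_left h4 hε.le
      nlinarith
    · change dist (g w.1 w.2 a) (g w'.1 w'.2 a) ≤ _
      rw [dist_eq_norm]
      have h4 := (hgLip w.1 w'.1 w.2 w'.2 a ha).trans h3
      nlinarith
  -- bound of the speed in the relevant region
  let P : ℝ := ε * Q0 + C + L0 * (Rx + (R + 1))
  have hP : 0 < P := by positivity
  have hspeed : ∀ w : Euc N × Euc M, ‖w.1‖ ≤ Rx → ‖w.2‖ ≤ R + 1 → ‖F w (sel w)‖ ≤ P := by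
    intro w h1 h2
    have hp1 : 0 < ε * Q0 := by positivity
    have hp2 : 0 < L0 * (Rx + (R + 1)) := by positivity
    refine max_le ?_ ?_
    · change ‖ε • f w.1 w.2 (sel w)‖ ≤ P
      rw [norm_smul, Real.norm_of_nonneg hε.le]
      have := mul_le_mul_of_nonneg_left (hfBdd w.1 w.2 (sel w) (hselA w)) hε.le
      simp only [P]
      linarith
    · change ‖g w.1 w.2 (sel w)‖ ≤ P
      have h3 := hgLip w.1 0 w.2 0 (sel w) (hselA w)
      simp only [sub_zero] at h3
      have h4 : ‖g w.1 w.2 (sel w)‖ ≤ ‖g 0 0 (sel w)‖ + ‖g w.1 w.2 (sel w) - g 0 0 (sel w)‖ := by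
        have := norm_add_le (g 0 0 (sel w)) (g w.1 w.2 (sel w) - g 0 0 (sel w))
        simpa using this
      have h5 := hselC w
      have h6 : L0 * (‖w.1‖ + ‖w.2‖) ≤ L0 * (Rx + (R + 1)) := by gcongr
      simp only [P]
      linarith
  -- time step
  obtain ⟨τ, hτ, hτK, hτδ, hτ1⟩ : ∃ τ : ℝ, 0 < τ ∧ (KK : ℝ) * τ ≤ 1 / 2 ∧
      2 * τ * P < δ ∧ 2 * τ * P ≤ 1 := by
    have hKK : (0:ℝ) ≤ KK := hKpos
    refine ⟨min (1 / (2 * (KK + 1))) (min (δ / (4 * P)) (1 / (2 * P))), by positivity, ?_, ?_, ?_⟩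
    · calc (KK:ℝ) * min (1 / (2 * ((KK:ℝ) + 1))) (min (δ / (4 * P)) (1 / (2 * P)))
          ≤ KK * (1 / (2 * ((KK:ℝ) + 1))) := by gcongr; exact min_le_left _ _
        _ ≤ 1 / 2 := by
          rw [mul_one_div, div_le_div_iff₀ (by positivity) (by positivity)]
          linarith
    · have h : min (1 / (2 * ((KK:ℝ) + 1))) (min (δ / (4 * P)) (1 / (2 * P))) ≤ δ / (4 * P) :=
        (min_le_right _ _).trans (min_le_left _ _)
      calc _ ≤ 2 * (δ / (4 * P)) * P := by gcongr
        _ = δ / 2 := by field_simp; ring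
        _ < δ := by linarith
    · have h : min (1 / (2 * ((KK:ℝ) + 1))) (min (δ / (4 * P)) (1 / (2 * P))) ≤ 1 / (2 * P) :=
        (min_le_right _ _).trans (min_le_right _ _)
      calc _ ≤ 2 * (1 / (2 * P)) * P := by gcongr
        _ = 1 := by field_simp
        _ ≤ 1 := le_rfl
  choose Φ hΦc hΦ0 hΦint hΦball using fun w =>
    step_exists (fun x => F x (sel w)) KK (hFLip _ (hselA w)) τ hτ hτK w
  have hFc : ∀ w, Continuous fun s => F (Φ w s) (sel w) := fun w =>
    (hFLip _ (hselA w)).continuous.comp (hΦc w)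
  -- invariance of the region during one step
  have hinv : ∀ w : Euc N × Euc M, ‖w.1‖ ≤ Rx → ‖w.2‖ ≤ R + 1 →
      ∀ t ∈ Icc 0 τ, ‖(Φ w t).2‖ ≤ R + 1 := by
    intro w h1 h2 t ht
    have hclose : ∀ s, dist (Φ w s) w ≤ 2 * τ * P := by
      intro s
      refine (mem_closedBall.mp (hΦball w s)).trans ?_
      have := hspeed w h1 h2
      gcongr
    by_cases hw : w ∈ K
    · refine (norm_le_of_inward (fun s => (Φ w s).2) (fun s => (F (Φ w s) (sel w)).2) τ w.2
        (continuous_snd.comp (hFc w)) ?_ ?_ t ht).trans h2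
      · intro s hs
        have := congrArg Prod.snd (hΦint w s hs)
        rw [Prod.snd_add] at this
        change (Φ w s).2 = _
        rw [this]
        congr 1
        exact ((ContinuousLinearMap.snd ℝ (Euc N) (Euc M)).intervalIntegral_comp_comm
          ((hFc w).intervalIntegrable 0 s)).symm
      · intro s _
        exact (hselK w hw (Φ w s) (mem_ball.mpr ((hclose s).trans_lt hτδ))).le
    · have hwR : ‖w.2‖ < R := by
        by_contra hcon
        push Not at hcon
        refine hw ⟨mem_closedBall_zero_iff.mpr h1, mem_closedBall_zero_iff.mpr h2, ?_⟩
        rw [mem_ball_zero_iff]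
        linarith
      have h3 : ‖(Φ w t).2 - w.2‖ ≤ dist (Φ w t) w := by
        rw [dist_eq_norm]; exact norm_snd_le (Φ w t - w)
      have h4 := hclose t
      have h5 : ‖(Φ w t).2‖ ≤ ‖w.2‖ + ‖(Φ w t).2 - w.2‖ := by
        have := norm_add_le w.2 ((Φ w t).2 - w.2)
        simpa using this
      linarith
  -- the concatenated trajectory
  let u : ℕ → Euc N × Euc M := fun n => (fun w => Φ w τ)^[n] z
  have hu0 : u 0 = z := rfl
  have hus : ∀ n, Φ (u n) τ = u (n + 1) := fun n =>
    (Function.iterate_succ_apply' (fun w => Φ w τ) n z).symm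
  let W : ℝ → Euc N × Euc M := fun t => Φ (u ⌊t / τ⌋₊) (t - ⌊t / τ⌋₊ * τ)
  let α : ℝ → Euc k := fun t => sel (u ⌊t / τ⌋₊)
  have hfloor : ∀ n : ℕ, ∀ s, 0 ≤ s → s < τ → ⌊(n * τ + s) / τ⌋₊ = n := by
    intro n s hs hs'
    have hpos : 0 ≤ n * τ + s := by positivity
    rw [Nat.floor_eq_iff (by positivity), le_div_iff₀ hτ, div_lt_iff₀ hτ]
    constructor <;> nlinarith
  have hW : ∀ n : ℕ, ∀ s, 0 ≤ s → s < τ → W (n * τ + s) = Φ (u n) s := by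
    intro n s hs hs'
    simp only [W, hfloor n s hs hs']
    congr 1; ring
  have hα : ∀ n : ℕ, ∀ s, 0 ≤ s → s < τ → α (n * τ + s) = sel (u n) := by
    intro n s hs hs'
    simp only [α, hfloor n s hs hs']
  have hW0 : W 0 = z := by
    have := hW 0 0 le_rfl hτ
    simpa [hΦ0, hu0] using this
  have htraj := concat_traj F τ hτ u (fun n => sel (u n)) (fun n => Φ (u n)) (fun n => hFc _)
    (fun n => hΦ0 _) hus (fun n => hΦint _) W α hW hα
  have hfint : ∀ t, 0 ≤ t →
      IntervalIntegrable (fun s => f (W s).1 (W s).2 (α s)) volume 0 t := by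
    intro t ht
    have hi : IntervalIntegrable (fun s => (F (W s) (α s)).1) volume 0 t :=
      ⟨Integrable.fst (htraj t ht).1.1, Integrable.fst (htraj t ht).1.2⟩
    have h := hi.smul ε⁻¹
    refine h.congr_uIoo fun s _ => ?_
    simp [F, smul_smul, inv_mul_cancel₀ hε.ne']
  have hξ : ∀ t, 0 ≤ t → (W t).1 = (W 0).1 + ε • ∫ s in (0:ℝ)..t, f (W s).1 (W s).2 (α s) := by
    intro t ht
    have h := htraj t ht
    have h2 := congrArg Prod.fst h.2
    rw [Prod.fst_add] at h2
    rw [h2]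
    congr 1
    rw [← intervalIntegral.integral_smul]
    exact ((ContinuousLinearMap.fst ℝ (Euc N) (Euc M)).intervalIntegral_comp_comm h.1).symm
  have hη : ∀ t, 0 ≤ t → (W t).2 = (W 0).2 + ∫ s in (0:ℝ)..t, g (W s).1 (W s).2 (α s) := by
    intro t ht
    have h := htraj t ht
    have h2 := congrArg Prod.snd h.2
    rw [Prod.snd_add] at h2
    rw [h2]
    congr 1
    exact ((ContinuousLinearMap.snd ℝ (Euc N) (Euc M)).intervalIntegral_comp_comm h.1).symm
  have hzρ := hBρ z hz
  have hz1 := (norm_fst_le z).trans hzρ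
  have hz2 := (norm_snd_le z).trans hzρ
  -- the slow variable
  have hslow : ∀ t, 0 ≤ t → t ≤ S / ε → ‖(W t).1‖ ≤ Rx := by
    intro t ht htS
    rw [hξ t ht, hW0]
    have h1 : ‖∫ s in (0:ℝ)..t, f (W s).1 (W s).2 (α s)‖ ≤ Q0 * |t - 0| :=
      intervalIntegral.norm_integral_le_of_norm_le_const fun s _ => hfBdd _ _ _ (hselA _)
    rw [sub_zero, abs_of_nonneg ht] at h1
    rw [le_div_iff₀ hε] at htS
    refine (norm_add_le _ _).trans ?_
    rw [norm_smul, Real.norm_of_nonneg hε.le]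
    have h2 := mul_le_mul_of_nonneg_left h1 hε.le
    have h3 := mul_le_mul_of_nonneg_left htS hQ0.le
    rw [hRx]
    nlinarith
  have hWn : ∀ n : ℕ, W (n * τ) = u n := by
    intro n
    have := hW n 0 le_rfl hτ
    rwa [add_zero, hΦ0] at this
  have hgrid : ∀ n : ℕ, n * τ ≤ S / ε → ‖(u n).2‖ ≤ R + 1 := by
    intro n
    induction n with
    | zero => intro _; rw [hu0]; linarith
    | succ n ih =>
      intro hn
      have hn' : n * τ ≤ S / ε := by
        push_cast at hn
        nlinarith
      rw [← hus]
      refine hinv (u n) ?_ (ih hn') τ ⟨hτ.le, le_rfl⟩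
      rw [← hWn]
      exact hslow _ (by positivity) hn'
  refine ⟨α, fun t => (W t).1, fun t => (W t).2, ⟨?_, fun t => hselA _⟩,
    ⟨hfint, fun t ht => ⟨Integrable.snd (htraj t ht).1.1, Integrable.snd (htraj t ht).1.2⟩, hξ, hη⟩, by simp only [hW0], by simp only [hW0], ?_⟩
  · exact (measurable_from_nat (f := fun n => sel (u n))).comp
      (Nat.measurable_floor.comp (measurable_id.div_const τ))
  · intro t ht htS
    refine ⟨mem_closedBall_zero_iff.mpr (hslow t ht htS), mem_closedBall_zero_iff.mpr ?_⟩
    have hfl := Nat.floor_le (div_nonneg ht hτ.le)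
    have hfl2 := Nat.lt_floor_add_one (t / τ)
    rw [le_div_iff₀ hτ] at hfl
    rw [div_lt_iff₀ hτ] at hfl2
    have hn' : ⌊t / τ⌋₊ * τ ≤ S / ε := hfl.trans htS
    refine hinv (u ⌊t / τ⌋₊) ?_ (hgrid _ hn') _ ⟨by linarith, by linarith⟩
    rw [← hWn]
    exact hslow _ (by positivity) hn'
end

section
/- Under assumptions (H1)–(H3), given x ∈ ℝ^N and y, z ∈ ℝ^M, there exist S0 > 0 and, for each S ≥ S0, a constant P > 0 such that for every ε ∈ (0,1] there are a control α and a trajectory (ξ̄_ε, η̄_ε) of (CD_ε) with (ξ̄_ε(0), η̄_ε(0)) = (x,y) satisfying |η̄_ε(S) − z| ≤ P ε; that is, the prescribed value z of the fast variable can be approximated at any sufficiently large predetermined time S with error O(ε). -/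
open Set MeasureTheory Metric Filter
open scoped RealInnerProductSpace Topology

/-- Measurable controls with finitely many values, all in `A`. -/
def GoodCtl {k : ℕ} (A : Set (Euc k)) (α : ℝ → Euc k) : Prop :=
  Measurable α ∧ (range α).Finite ∧ ∀ t, α t ∈ A

lemma GoodCtl.const {k : ℕ} {A : Set (Euc k)} {a : Euc k} (ha : a ∈ A) :
    GoodCtl A (fun _ => a) :=
  ⟨measurable_const, Set.finite_range_const, fun _ => ha⟩

lemma GoodCtl.glue {k : ℕ} {A : Set (Euc k)} {α β : ℝ → Euc k} (hα : GoodCtl A α)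
    (hβ : GoodCtl A β) (m : ℝ) : GoodCtl A (fun s => if s ≤ m then α s else β s) := by
  refine ⟨Measurable.ite measurableSet_Iic hα.1 hβ.1, ?_, ?_⟩
  · refine (hα.2.1.union hβ.2.1).subset ?_
    rintro _ ⟨s, rfl⟩
    by_cases h : s ≤ m
    · left; exact ⟨s, by simp [h]⟩
    · right; exact ⟨s, by simp [h]⟩
  · intro t
    dsimp only
    split_ifs
    · exact hα.2.2 t
    · exact hβ.2.2 t

lemma GoodCtl.integrable {k : ℕ} {A : Set (Euc k)} {α : ℝ → Euc k} (hα : GoodCtl A α)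
    {E : Type*} [NormedAddCommGroup E] [NormedSpace ℝ E] (H : ℝ → Euc k → E)
    (hH : ∀ a ∈ A, Continuous fun s => H s a) (p q : ℝ) :
    IntervalIntegrable (fun s => H s (α s)) volume p q := by
  classical
  have key : (fun s => H s (α s)) =
      ∑ a ∈ hα.2.1.toFinset, (α ⁻¹' {a}).indicator (fun s => H s a) := by
    funext s
    rw [Finset.sum_apply, Finset.sum_eq_single (α s)]
    · simp
    · intro b _ hb
      rw [Set.indicator_of_notMem]
      simpa using fun h => hb h.symm
    · intro h
      simp at h
  rw [key]
  refine IntervalIntegrable.sum _ ?_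
  intro a ha
  have haA : a ∈ A := by
    simp only [Set.Finite.mem_toFinset, Set.mem_range] at ha
    obtain ⟨s, rfl⟩ := ha
    exact hα.2.2 s
  have h1 : IntervalIntegrable (fun s => H s a) volume p q := (hH a haA).intervalIntegrable p q
  have hm : MeasurableSet (α ⁻¹' {a}) := hα.1 (measurableSet_singleton a)
  exact ⟨h1.1.indicator hm, h1.2.indicator hm⟩

/-- `w` can be realised, near time `c`, as an average velocity with good controls. -/
def Chat {k : ℕ} (A : Set (Euc k)) {E : Type*} [NormedAddCommGroup E] [NormedSpace ℝ E]
    (G : ℝ → Euc k → E) (c : ℝ) (w : E) : Prop :=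
  ∀ δ > 0, ∃ h > 0, ∀ p q : ℝ, p ≤ q → c - h < p → q < c + h →
    ∃ α, GoodCtl A α ∧ (∀ t ∈ Icc p q, ‖∫ s in p..t, (G s (α s) - w)‖ ≤ δ) ∧
      ‖∫ s in p..q, (G s (α s) - w)‖ ≤ δ * (q - p)

section chatter
variable {k : ℕ} {A : Set (Euc k)} {E : Type*} [NormedAddCommGroup E] [NormedSpace ℝ E]
  [CompleteSpace E] {G : ℝ → Euc k → E}

lemma glue_left (w : E) (α β : ℝ → Euc k) {p m t : ℝ} (hp : p ≤ m) (ht : t ≤ m) :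
    ∫ s in p..t, (G s (if s ≤ m then α s else β s) - w) = ∫ s in p..t, (G s (α s) - w) := by
  refine intervalIntegral.integral_congr ?_
  intro s hs
  have : s ≤ m := hs.2.trans (sup_le hp ht)
  simp [this]

lemma glue_right (w : E) (α β : ℝ → Euc k) {m t : ℝ} (ht : m ≤ t) :
    ∫ s in m..t, (G s (if s ≤ m then α s else β s) - w) = ∫ s in m..t, (G s (β s) - w) := by
  refine intervalIntegral.integral_congr_uIoo ?_
  intro s hs
  rw [uIoo_of_le ht] at hs
  have : ¬ s ≤ m := not_le.mpr hs.1
  simp [this]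

lemma chat_const (hG : ∀ a ∈ A, Continuous fun s => G s a) {c : ℝ} {a : Euc k} (ha : a ∈ A) :
    Chat A G c (G c a) := by
  intro δ hδ
  obtain ⟨h, hh, hb⟩ := Metric.continuous_iff.mp (hG a ha) c δ hδ
  refine ⟨min h (1/2), by positivity, fun p q hpq hp hq => ⟨fun _ => a, GoodCtl.const ha, ?_⟩⟩
  have h1 : min h (1/2) ≤ h := min_le_left _ _
  have h2 : min h (1/2) ≤ 1/2 := min_le_right _ _
  have main : ∀ t ∈ Icc p q, ‖∫ s in p..t, (G s a - G c a)‖ ≤ δ * (t - p) := by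
    intro t ht
    have := intervalIntegral.norm_integral_le_of_norm_le_const (a := p) (b := t) (C := δ)
      (f := fun s => G s a - G c a) ?_
    · rwa [abs_of_nonneg (by linarith [ht.1])] at this
    · intro s hs
      rw [uIoc_of_le ht.1] at hs
      rw [← dist_eq_norm]
      refine (hb s ?_).le
      rw [Real.dist_eq, abs_lt]
      constructor <;> linarith [hs.1, hs.2, ht.2]
  refine ⟨fun t ht => (main t ht).trans ?_, main q ⟨hpq, le_rfl⟩⟩
  have : t - p ≤ 1 := by linarith [ht.2]
  nlinarith

lemma chat_closed (hG : ∀ a ∈ A, Continuous fun s => G s a) (c : ℝ) :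
    IsClosed {w | Chat A G c w} := by
  rw [← closure_subset_iff_isClosed]
  intro w hw δ hδ
  obtain ⟨w', hw', hd⟩ := Metric.mem_closure_iff.mp hw (δ/2) (by positivity)
  obtain ⟨h, hh, H⟩ := hw' (δ/2) (by positivity)
  refine ⟨min h (1/2), by positivity, fun p q hpq hp hq => ?_⟩
  have h1 : min h (1/2) ≤ h := min_le_left _ _
  have h2 : min h (1/2) ≤ 1/2 := min_le_right _ _
  obtain ⟨α, hα, H1, H2⟩ := H p q hpq (by linarith) (by linarith)
  refine ⟨α, hα, ?_⟩
  have main : ∀ t ∈ Icc p q, ‖∫ s in p..t, (G s (α s) - w)‖ ≤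
      ‖∫ s in p..t, (G s (α s) - w')‖ + δ/2 * (t - p) := by
    intro t ht
    have e : ∫ s in p..t, (G s (α s) - w) =
        (∫ s in p..t, (G s (α s) - w')) + (t - p) • (w' - w) := by
      rw [intervalIntegral.integral_sub (hα.integrable G hG p t) (by simp),
        intervalIntegral.integral_sub (hα.integrable G hG p t) (by simp)]
      simp only [intervalIntegral.integral_const, smul_sub]
      abel
    rw [e]
    refine (norm_add_le _ _).trans ?_
    gcongr
    rw [norm_smul, Real.norm_of_nonneg (by linarith [ht.1]), ← dist_eq_norm, dist_comm, mul_comm]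
    have := ht.1
    gcongr
  constructor
  · intro t ht
    have a1 := main t ht
    have a2 := H1 t ht
    have : t - p ≤ 1 := by linarith [ht.2]
    nlinarith
  · have a1 := main q ⟨hpq, le_rfl⟩
    linarith

lemma chat_convex (hG : ∀ a ∈ A, Continuous fun s => G s a) (c : ℝ) :
    Convex ℝ {w | Chat A G c w} := by
  intro w₁ hw₁ w₂ hw₂ l m hl hm hlm δ hδ
  set w := l • w₁ + m • w₂ with hw
  obtain ⟨h₁, hh₁, H₁⟩ := hw₁ (δ/4) (by positivity)
  obtain ⟨h₂, hh₂, H₂⟩ := hw₂ (δ/4) (by positivity)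
  set D := ‖w₁ - w‖ + ‖w₂ - w‖ + 1 with hD
  have hDpos : 0 < D := by positivity
  set h := min (min h₁ h₂) (min (1/2) (δ / (8 * D))) with hh
  have k1 : h ≤ h₁ := (min_le_left _ _).trans (min_le_left _ _)
  have k2 : h ≤ h₂ := (min_le_left _ _).trans (min_le_right _ _)
  have k3 : h ≤ 1/2 := (min_le_right _ _).trans (min_le_left _ _)
  have k4 : h ≤ δ / (8 * D) := (min_le_right _ _).trans (min_le_right _ _)
  have k5 : D * h ≤ δ / 8 := by
    calc D * h ≤ D * (δ / (8 * D)) := by gcongr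
      _ = δ / 8 := by field_simp
  refine ⟨h, by positivity, fun p q hpq hp hq => ?_⟩
  set x := p + l * (q - p) with hx
  have hqp : 0 ≤ q - p := by linarith
  have hpx : p ≤ x := by nlinarith
  have hxq' : q - x = m * (q - p) := by rw [hx]; linear_combination (-(q - p)) * hlm
  have hxq : x ≤ q := by nlinarith
  obtain ⟨α, hα, A1, A2⟩ := H₁ p x hpx (by linarith) (by linarith)
  obtain ⟨β, hβ, B1, B2⟩ := H₂ x q hxq (by linarith) (by linarith)
  have hγ := hα.glue hβ x
  refine ⟨_, hγ, ?_⟩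
  have shift : ∀ (γ : ℝ → Euc k), GoodCtl A γ → ∀ (a t : ℝ) (w' : E),
      ∫ s in a..t, (G s (γ s) - w) = (∫ s in a..t, (G s (γ s) - w')) + (t - a) • (w' - w) := by
    intro γ hγ a t w'
    rw [intervalIntegral.integral_sub (hγ.integrable G hG a t) (by simp),
      intervalIntegral.integral_sub (hγ.integrable G hG a t) (by simp)]
    simp only [intervalIntegral.integral_const, smul_sub]
    abel
  have addv : ∀ t, x ≤ t → ∫ s in p..t, (G s (if s ≤ x then α s else β s) - w) =
      (∫ s in p..x, (G s (α s) - w)) + ∫ s in x..t, (G s (β s) - w) := by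
    intro t ht
    rw [← glue_left w α β hpx le_rfl, ← glue_right w α β ht]
    refine (intervalIntegral.integral_add_adjacent_intervals ?_ ?_).symm
    · exact (hγ.integrable G hG _ _).sub (by simp)
    · exact (hγ.integrable G hG _ _).sub (by simp)
  have b1 : ∀ t ∈ Icc p x, ‖∫ s in p..t, (G s (α s) - w)‖ ≤ δ / 2 := by
    intro t ht
    rw [shift α hα p t w₁]
    refine (norm_add_le _ _).trans ?_
    have := A1 t ht
    rw [norm_smul, Real.norm_of_nonneg (by linarith [ht.1])]
    have e1 : (t - p) * ‖w₁ - w‖ ≤ (2 * h) * D := by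
      have := ht.1
      have := ht.2
      gcongr
      · linarith
      · rw [hD]; linarith [norm_nonneg (w₂ - w)]
    linarith
  have b2 : ∀ t ∈ Icc x q, ‖∫ s in x..t, (G s (β s) - w)‖ ≤ δ / 2 := by
    intro t ht
    rw [shift β hβ x t w₂]
    refine (norm_add_le _ _).trans ?_
    have := B1 t ht
    rw [norm_smul, Real.norm_of_nonneg (by linarith [ht.1])]
    have e1 : (t - x) * ‖w₂ - w‖ ≤ (2 * h) * D := by
      have := ht.1
      have := ht.2
      gcongr
      · linarith
      · rw [hD]; linarith [norm_nonneg (w₁ - w)]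
    linarith
  constructor
  · intro t ht
    rcases le_total t x with htx | htx
    · rw [glue_left w α β hpx htx]
      linarith [b1 t ⟨ht.1, htx⟩]
    · rw [addv t htx]
      refine (norm_add_le _ _).trans ?_
      linarith [b1 x ⟨hpx, le_rfl⟩, b2 t ⟨htx, ht.2⟩]
  · rw [addv q hxq, shift α hα p x w₁, shift β hβ x q w₂]
    have z : (x - p) • (w₁ - w) + (q - x) • (w₂ - w) = 0 := by
      have e1 : x - p = l * (q - p) := by rw [hx]; ring
      have e2 : m = 1 - l := by linarith
      rw [hxq', e1, hw, e2]
      module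
    have e : ∀ a b c d : E, b + d = 0 → a + b + (c + d) = a + c := by
      intro a b c d hbd
      calc a + b + (c + d) = a + c + (b + d) := by abel
        _ = _ := by rw [hbd, add_zero]
    rw [e _ _ _ _ z]
    refine (norm_add_le _ _).trans ?_
    nlinarith

lemma chat_of_mem (hG : ∀ a ∈ A, Continuous fun s => G s a) {c : ℝ} {w : E}
    (hw : w ∈ closure (convexHull ℝ ((fun a => G c a) '' A))) : Chat A G c w := by
  have : closure (convexHull ℝ ((fun a => G c a) '' A)) ⊆ {w | Chat A G c w} := by
    refine closure_minimal (convexHull_min ?_ (chat_convex hG c)) (chat_closed hG c)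
    rintro _ ⟨a, ha, rfl⟩
    exact chat_const hG ha
  exact this hw

lemma chat_global (hne : A.Nonempty) (hG : ∀ a ∈ A, Continuous fun s => G s a) {S : ℝ} (hS : 0 < S)
    {w : E} (hw : ∀ c ∈ Icc 0 S, Chat A G c w) {δ : ℝ} (hδ : 0 < δ) :
    ∃ α, GoodCtl A α ∧ ∀ t ∈ Icc 0 S, ‖∫ s in (0:ℝ)..t, (G s (α s) - w)‖ ≤ δ := by
  set d := δ / (1 + S) with hd
  have hdpos : 0 < d := by positivity
  have hch : ∀ c : Icc (0:ℝ) S, ∃ h > 0, ∀ p q : ℝ, p ≤ q → c - h < p → q < c + h →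
    ∃ α, GoodCtl A α ∧ (∀ t ∈ Icc p q, ‖∫ s in p..t, (G s (α s) - w)‖ ≤ d) ∧
      ‖∫ s in p..q, (G s (α s) - w)‖ ≤ d * (q - p) := fun c => hw c c.2 d hdpos
  choose h hh H using hch
  obtain ⟨τ, τ0, τm, ⟨n0, hn0⟩, τc⟩ := exists_monotone_Icc_subset_open_cover_Icc hS.le
    (c := fun c : Icc (0:ℝ) S => Metric.ball c (h c)) (fun _ => Metric.isOpen_ball)
    (fun c _ => Set.mem_iUnion.mpr ⟨c, Metric.mem_ball_self (hh c)⟩)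
  have ind : ∀ n : ℕ, ∃ α, GoodCtl A α ∧
      (∀ t ∈ Icc 0 (τ n : ℝ), ‖∫ s in (0:ℝ)..t, (G s (α s) - w)‖ ≤ d * (1 + τ n)) ∧
      ‖∫ s in (0:ℝ)..(τ n), (G s (α s) - w)‖ ≤ d * τ n := by
    intro n
    induction n with
    | zero =>
      obtain ⟨a, ha⟩ := hne
      refine ⟨fun _ => a, GoodCtl.const ha, ?_, ?_⟩
      · intro t ht
        rw [τ0] at ht
        have : t = 0 := le_antisymm ht.2 ht.1
        subst this
        simp [τ0, hdpos.le]
      · simp [τ0]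
    | succ n ih =>
      obtain ⟨α, hα, A1, A2⟩ := ih
      obtain ⟨c, hc⟩ := τc n
      have hle : τ n ≤ τ (n+1) := τm (Nat.le_succ n)
      have hle' : (τ n : ℝ) ≤ τ (n+1) := hle
      have m1 := hc ⟨le_rfl, hle⟩
      have m2 := hc ⟨hle, le_rfl⟩
      rw [Metric.mem_ball, Subtype.dist_eq, Real.dist_eq, abs_lt] at m1 m2
      obtain ⟨β, hβ, B1, B2⟩ := H c (τ n) (τ (n+1)) hle' (by linarith) (by linarith)
      have hγ := hα.glue hβ (τ n)
      have hτ0 : (0:ℝ) ≤ τ n := (τ n).2.1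
      have addv : ∀ t, (τ n : ℝ) ≤ t →
          ∫ s in (0:ℝ)..t, (G s (if s ≤ τ n then α s else β s) - w) =
          (∫ s in (0:ℝ)..(τ n), (G s (α s) - w)) + ∫ s in (τ n : ℝ)..t, (G s (β s) - w) := by
        intro t ht
        rw [← glue_left w α β hτ0 le_rfl, ← glue_right w α β ht]
        refine (intervalIntegral.integral_add_adjacent_intervals ?_ ?_).symm
        · exact (hγ.integrable G hG _ _).sub (by simp)
        · exact (hγ.integrable G hG _ _).sub (by simp)
      refine ⟨_, hγ, ?_, ?_⟩
      · intro t ht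
        rcases le_total t (τ n) with htx | htx
        · rw [glue_left w α β hτ0 htx]
          have := A1 t ⟨ht.1, htx⟩
          nlinarith
        · rw [addv t htx]
          refine (norm_add_le _ _).trans ?_
          have := B1 t ⟨htx, ht.2⟩
          nlinarith
      · rw [addv _ hle']
        refine (norm_add_le _ _).trans ?_
        linarith
  obtain ⟨α, hα, A1, -⟩ := ind n0
  refine ⟨α, hα, ?_⟩
  rw [hn0 n0 le_rfl] at A1
  intro t ht
  refine (A1 t ht).trans (le_of_eq ?_)
  rw [hd]; field_simp

end chatter

lemma int_exp_bound {c K T : ℝ} (hc : 0 < c) :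
    ∫ s in (0:ℝ)..T, K * Real.exp (c * s) = K * ((Real.exp (c * T) - 1) / c) := by
  rw [intervalIntegral.integral_const_mul, intervalIntegral.integral_comp_mul_left _ hc.ne']
  simp only [integral_exp, mul_zero, Real.exp_zero, smul_eq_mul]
  ring

/-- Global Carathéodory existence. -/
lemma carath {E : Type*} [NormedAddCommGroup E] [NormedSpace ℝ E] [CompleteSpace E]
    (F : ℝ → E → E) (L C : ℝ) (hL : 0 < L) (hC : 0 ≤ C)
    (hint : ∀ u : ℝ → E, Continuous u → ∀ a b, IntervalIntegrable (fun s => F s (u s)) volume a b)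
    (hLip : ∀ s e₁ e₂, ‖F s e₁ - F s e₂‖ ≤ L * ‖e₁ - e₂‖)
    (hB : ∀ s, ‖F s 0‖ ≤ C) (u0 : E) :
    ∃ u : ℝ → E, Continuous u ∧ ∀ t, 0 ≤ t → u t = u0 + ∫ s in (0:ℝ)..t, F s (u s) := by
  set c := 2 * L with hc
  have hcpos : 0 < c := by positivity
  let U : BoundedContinuousFunction ℝ E → ℝ → E := fun w s => Real.exp (c * s) • w s
  have hU : ∀ w, Continuous (U w) := fun w => by
    have := w.continuous
    fun_prop
  let Φ0 : BoundedContinuousFunction ℝ E → ℝ → E := fun w t =>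
    Real.exp (-(c * max t 0)) • (u0 + ∫ s in (0:ℝ)..(max t 0), F s (U w s))
  have hΦc : ∀ w, Continuous (Φ0 w) := by
    intro w
    have h1 : Continuous fun b => ∫ s in (0:ℝ)..b, F s (U w s) :=
      intervalIntegral.continuous_primitive (hint _ (hU w)) 0
    have h2 : Continuous fun t : ℝ => max t 0 := by fun_prop
    have h3 := h1.comp h2
    have h4 : Continuous fun t : ℝ => Real.exp (-(c * max t 0)) := by fun_prop
    exact h4.smul (continuous_const.add h3)
  have expb : ∀ T : ℝ, 0 ≤ T → ∀ K : ℝ, 0 ≤ K →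
      Real.exp (-(c*T)) * (K * ((Real.exp (c * T) - 1) / c)) ≤ K / c := by
    intro T hT K hK
    have : Real.exp (-(c*T)) * Real.exp (c*T) = 1 := by rw [← Real.exp_add]; simp
    have e : Real.exp (-(c*T)) * (K * ((Real.exp (c * T) - 1) / c)) =
        K / c * (1 - Real.exp (-(c*T))) := by
      linear_combination (K / c) * this
    rw [e]
    have p1 : 0 ≤ K / c := by positivity
    nlinarith [Real.exp_pos (-(c*T))]
  have hΦb : ∀ w t, ‖Φ0 w t‖ ≤ ‖u0‖ + (C + L * ‖w‖) / c := by
    intro w t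
    have hT : 0 ≤ max t 0 := le_max_right _ _
    set T := max t 0 with hTdef
    have i1 : ‖∫ s in (0:ℝ)..T, F s (U w s)‖ ≤ ∫ s in (0:ℝ)..T, (C + L * ‖w‖) * Real.exp (c*s) := by
      refine intervalIntegral.norm_integral_le_of_norm_le hT ?_ ?_
      · refine Filter.Eventually.of_forall fun s hs => ?_
        have a1 : ‖F s (U w s)‖ ≤ ‖F s (U w s) - F s 0‖ + ‖F s 0‖ := by
          simpa using norm_add_le (F s (U w s) - F s 0) (F s 0)
        have a2 := hLip s (U w s) 0
        have a3 : ‖U w s - 0‖ ≤ Real.exp (c*s) * ‖w‖ := by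
          rw [sub_zero]
          simp only [U, norm_smul, Real.norm_eq_abs, Real.abs_exp]
          gcongr
          exact w.norm_coe_le_norm s
        have a4 : 1 ≤ Real.exp (c*s) := Real.one_le_exp (mul_nonneg hcpos.le hs.1.le)
        have a5 := hB s
        have a6 : L * ‖U w s - 0‖ ≤ L * (Real.exp (c*s) * ‖w‖) := by gcongr
        nlinarith
      · exact Continuous.intervalIntegrable (by fun_prop) _ _
    rw [int_exp_bound hcpos] at i1
    simp only [Φ0]
    rw [norm_smul, Real.norm_eq_abs, Real.abs_exp]
    have x1 : Real.exp (-(c*T)) ≤ 1 := Real.exp_le_one_iff.mpr (by nlinarith)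
    calc Real.exp (-(c*T)) * ‖u0 + ∫ s in (0:ℝ)..T, F s (U w s)‖
        ≤ Real.exp (-(c*T)) * (‖u0‖ + (C + L * ‖w‖) * ((Real.exp (c * T) - 1) / c)) := by
          gcongr
          exact (norm_add_le _ _).trans (by gcongr)
      _ = Real.exp (-(c*T)) * ‖u0‖ +
          Real.exp (-(c*T)) * ((C + L * ‖w‖) * ((Real.exp (c * T) - 1) / c)) := by ring
      _ ≤ 1 * ‖u0‖ + (C + L * ‖w‖) / c := by
          gcongr
          exact expb T hT _ (by positivity)
      _ = _ := by ring
  let Φ : BoundedContinuousFunction ℝ E → BoundedContinuousFunction ℝ E := fun w =>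
    BoundedContinuousFunction.ofNormedAddCommGroup (Φ0 w) (hΦc w) _ (hΦb w)
  have hcontr : ContractingWith (1/2) Φ := by
    refine ⟨by rw [← NNReal.coe_lt_coe]; norm_num, LipschitzWith.of_dist_le_mul fun w₁ w₂ => ?_⟩
    rw [BoundedContinuousFunction.dist_le (by positivity)]
    intro t
    have hT : 0 ≤ max t 0 := le_max_right _ _
    change dist (Φ0 w₁ t) (Φ0 w₂ t) ≤ _
    simp only [Φ0]
    set T := max t 0 with hTdef
    rw [dist_eq_norm, ← smul_sub, add_sub_add_left_eq_sub,
      ← intervalIntegral.integral_sub (hint _ (hU w₁) _ _) (hint _ (hU w₂) _ _)]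
    have i1 : ‖∫ s in (0:ℝ)..T, (F s (U w₁ s) - F s (U w₂ s))‖ ≤
        ∫ s in (0:ℝ)..T, (L * dist w₁ w₂) * Real.exp (c*s) := by
      refine intervalIntegral.norm_integral_le_of_norm_le hT ?_ ?_
      · refine Filter.Eventually.of_forall fun s hs => ?_
        have a3 : ‖U w₁ s - U w₂ s‖ ≤ Real.exp (c*s) * dist w₁ w₂ := by
          simp only [U]
          rw [← smul_sub, norm_smul, Real.norm_eq_abs, Real.abs_exp, ← dist_eq_norm]
          gcongr
          exact BoundedContinuousFunction.dist_coe_le_dist s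
        calc _ ≤ L * ‖U w₁ s - U w₂ s‖ := hLip _ _ _
          _ ≤ L * (Real.exp (c*s) * dist w₁ w₂) := by gcongr
          _ = _ := by ring
      · exact Continuous.intervalIntegrable (by fun_prop) _ _
    rw [int_exp_bound hcpos] at i1
    rw [norm_smul, Real.norm_eq_abs, Real.abs_exp]
    calc _ ≤ Real.exp (-(c*T)) * ((L * dist w₁ w₂) * ((Real.exp (c * T) - 1) / c)) := by gcongr
      _ ≤ (L * dist w₁ w₂) / c := expb T hT _ (by positivity)
      _ = _ := by rw [hc]; push_cast; field_simp
  have hfix := hcontr.fixedPoint_isFixedPt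
  set w := ContractingWith.fixedPoint Φ hcontr with hw
  refine ⟨U w, hU w, fun t ht => ?_⟩
  have e1 : w t = Φ0 w t := by
    conv_lhs => rw [← hfix.eq]
    rfl
  have e2 : U w t = Real.exp (c*t) • Φ0 w t := by rw [← e1]
  rw [e2]
  simp only [Φ0]
  rw [max_eq_left ht, smul_smul, ← Real.exp_add]
  simp

lemma gron {e : ℝ → ℝ} (he : Continuous e) (he0 : ∀ t, 0 ≤ e t) {D L S : ℝ} (hL : 0 < L)
    (hS : 0 ≤ S) (h : ∀ t ∈ Icc 0 S, e t ≤ D + L * ∫ s in (0:ℝ)..t, e s) :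
    e S ≤ D * Real.exp (L * S) := by
  have hI : ∀ t, 0 ≤ t → 0 ≤ ∫ s in (0:ℝ)..t, e s := fun t ht =>
    intervalIntegral.integral_nonneg ht fun s _ => he0 s
  have hd : ∀ t, HasDerivAt (fun t => ∫ s in (0:ℝ)..t, e s) (e t) t := fun t =>
    he.integral_hasStrictDerivAt 0 t |>.hasDerivAt
  have := norm_le_gronwallBound_of_norm_deriv_right_le (f := fun t => ∫ s in (0:ℝ)..t, e s)
    (f' := e) (δ := 0) (K := L) (ε := D) (a := 0) (b := S)
    (fun t _ => (hd t).continuousAt.continuousWithinAt)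
    (fun t _ => (hd t).hasDerivWithinAt) (by simp) (fun t ht => by
      rw [Real.norm_of_nonneg (he0 t), Real.norm_of_nonneg (hI t ht.1)]
      linarith [h t ⟨ht.1, ht.2.le⟩]) S ⟨hS, le_rfl⟩
  rw [Real.norm_of_nonneg (hI S hS), gronwallBound_of_K_ne_0 hL.ne'] at this
  have h2 := h S ⟨hS, le_rfl⟩
  simp only [zero_mul, zero_add, sub_zero] at this
  have h3 : L * (∫ s in (0:ℝ)..S, e s) ≤ L * (D / L * (Real.exp (L * S) - 1)) := by gcongr
  have h4 : L * (D / L * (Real.exp (L * S) - 1)) = D * Real.exp (L * S) - D := by field_simp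
  linarith

theorem statement5
    {N M k : ℕ} (A : Set (Euc k)) (hA : IsCompact A) (hAne : A.Nonempty)
    (f : Euc N → Euc M → Euc k → Euc N) (g : Euc N → Euc M → Euc k → Euc M)
    (L0 Q0 : ℝ) (hL0 : 0 < L0) (hQ0 : 0 < Q0)
    (hfLip : ∀ (x₁ x₂ : Euc N) (y₁ y₂ : Euc M), ∀ a ∈ A,
      ‖f x₁ y₁ a - f x₂ y₂ a‖ ≤ L0 * (‖x₁ - x₂‖ + ‖y₁ - y₂‖))
    (hgLip : ∀ (x₁ x₂ : Euc N) (y₁ y₂ : Euc M), ∀ a ∈ A,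
      ‖g x₁ y₁ a - g x₂ y₂ a‖ ≤ L0 * (‖x₁ - x₂‖ + ‖y₁ - y₂‖))
    (hfBdd : ∀ x y, ∀ a ∈ A, ‖f x y a‖ ≤ Q0)
    (hctrl : ∀ K : Set (Euc N × Euc M), IsCompact K → ∃ r > 0, ∀ z ∈ K,
      Metric.ball (0 : Euc M) r ⊆ closure (convexHull ℝ ((fun a => g z.1 z.2 a) '' A)))
 :
    ∀ (x : Euc N) (y z : Euc M), ∃ S0 > (0:ℝ), ∀ S : ℝ, S0 ≤ S → ∃ P > (0:ℝ),
      ∀ ε : ℝ, 0 < ε → ε ≤ 1 →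
        ∃ (α : ℝ → Euc k) (ξ : ℝ → Euc N) (η : ℝ → Euc M),
          IsControl A α ∧ IsTrajectory f g ε α ξ η ∧ ξ 0 = x ∧ η 0 = y ∧
          ‖η S - z‖ ≤ P * ε := by
  intro x y z
  obtain ⟨r, hr, hball⟩ := hctrl ({x} ×ˢ segment ℝ y z)
    (isCompact_singleton.prod (by
      rw [segment_eq_image_lineMap]
      exact isCompact_Icc.image (by fun_prop)))
  refine ⟨‖z - y‖ / r + 1, by positivity, fun S hS => ?_⟩
  have hSpos : 0 < S := lt_of_lt_of_le (by positivity) hS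
  refine ⟨(1 + L0 * Q0 * S * S) * Real.exp (L0 * S), by positivity, fun ε hε hε1 => ?_⟩
  set v : Euc M := S⁻¹ • (z - y) with hv
  have hvr : v ∈ Metric.ball (0 : Euc M) r := by
    rw [mem_ball_zero_iff, hv, norm_smul, norm_inv, Real.norm_of_nonneg hSpos.le,
      inv_mul_lt_iff₀ hSpos]
    have : ‖z - y‖ / r < S := by linarith
    rw [div_lt_iff₀ hr] at this
    exact this
  let yb : ℝ → Euc M := fun t => y + t • v
  have hyb : Continuous yb := by fun_prop
  have ybS : yb S = z := by
    simp only [yb, hv]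
    rw [smul_smul, mul_inv_cancel₀ hSpos.ne', one_smul]
    abel
  -- continuity of `f`, `g` along continuous curves
  have hfc : ∀ a ∈ A, Continuous fun p : Euc N × Euc M => f p.1 p.2 a := by
    intro a ha
    refine (LipschitzWith.of_dist_le_mul (K := Real.toNNReal (2 * L0)) fun p q => ?_).continuous
    rw [dist_eq_norm, Real.coe_toNNReal _ (by positivity)]
    refine (hfLip _ _ _ _ a ha).trans ?_
    have h1 : ‖p.1 - q.1‖ ≤ dist p q := by rw [dist_eq_norm]; exact norm_fst_le (p - q)
    have h2 : ‖p.2 - q.2‖ ≤ dist p q := by rw [dist_eq_norm]; exact norm_snd_le (p - q)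
    nlinarith
  have hgc : ∀ a ∈ A, Continuous fun p : Euc N × Euc M => g p.1 p.2 a := by
    intro a ha
    refine (LipschitzWith.of_dist_le_mul (K := Real.toNNReal (2 * L0)) fun p q => ?_).continuous
    rw [dist_eq_norm, Real.coe_toNNReal _ (by positivity)]
    refine (hgLip _ _ _ _ a ha).trans ?_
    have h1 : ‖p.1 - q.1‖ ≤ dist p q := by rw [dist_eq_norm]; exact norm_fst_le (p - q)
    have h2 : ‖p.2 - q.2‖ ≤ dist p q := by rw [dist_eq_norm]; exact norm_snd_le (p - q)
    nlinarith
  have hG : ∀ a ∈ A, Continuous fun s => g x (yb s) a := fun a ha =>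
    (hgc a ha).comp (continuous_const.prodMk hyb)
  have hchat : ∀ c ∈ Icc 0 S, Chat A (fun s a => g x (yb s) a) c v := by
    intro c hc
    refine chat_of_mem hG (hball (x, yb c) ⟨rfl, ?_⟩ hvr)
    rw [segment_eq_image']
    refine ⟨c / S, ⟨div_nonneg hc.1 hSpos.le, (div_le_one hSpos).mpr hc.2⟩, ?_⟩
    simp only [yb, hv, smul_smul, div_eq_mul_inv]
  obtain ⟨α, hα, hαb⟩ := chat_global hAne hG hSpos hchat hε
  -- existence of the trajectory
  let F : ℝ → Euc N × Euc M → Euc N × Euc M := fun s p =>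
    (ε • f p.1 p.2 (α s), g p.1 p.2 (α s))
  obtain ⟨C, hC⟩ : ∃ C, ∀ s, ‖F s 0‖ ≤ C := by
    have hfin : (range fun s => ‖F s 0‖).Finite := by
      refine (hα.2.1.image fun a => ‖((ε • f 0 0 a, g 0 0 a) : Euc N × Euc M)‖).subset ?_
      rintro _ ⟨s, rfl⟩
      exact ⟨α s, ⟨s, rfl⟩, rfl⟩
    obtain ⟨C, hC⟩ := hfin.bddAbove
    exact ⟨C, fun s => hC ⟨s, rfl⟩⟩
  have hintf : ∀ u : ℝ → Euc N × Euc M, Continuous u → ∀ a b,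
      IntervalIntegrable (fun s => f (u s).1 (u s).2 (α s)) volume a b := fun u hu a b =>
    hα.integrable (fun s a => f (u s).1 (u s).2 a) (fun a ha => (hfc a ha).comp hu) a b
  have hintg : ∀ u : ℝ → Euc N × Euc M, Continuous u → ∀ a b,
      IntervalIntegrable (fun s => g (u s).1 (u s).2 (α s)) volume a b := fun u hu a b =>
    hα.integrable (fun s a => g (u s).1 (u s).2 a) (fun a ha => (hgc a ha).comp hu) a b
  have hintF : ∀ u : ℝ → Euc N × Euc M, Continuous u → ∀ a b,
      IntervalIntegrable (fun s => F s (u s)) volume a b := fun u hu a b =>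
    hα.integrable (fun s a => ((ε • f (u s).1 (u s).2 a, g (u s).1 (u s).2 a) : Euc N × Euc M))
      (fun a ha => (((hfc a ha).comp hu).const_smul ε).prodMk ((hgc a ha).comp hu)) a b
  obtain ⟨u, hu, hue⟩ := carath F (2 * L0) C (by positivity) ((norm_nonneg _).trans (hC 0)) hintF
    (by
      intro s p q
      have h1 : ‖p.1 - q.1‖ ≤ ‖p - q‖ := norm_fst_le (p - q)
      have h2 : ‖p.2 - q.2‖ ≤ ‖p - q‖ := norm_snd_le (p - q)
      have h3 := hfLip p.1 q.1 p.2 q.2 (α s) (hα.2.2 s)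
      have h4 := hgLip p.1 q.1 p.2 q.2 (α s) (hα.2.2 s)
      have h5 : L0 * (‖p.1 - q.1‖ + ‖p.2 - q.2‖) ≤ 2 * L0 * ‖p - q‖ := by nlinarith
      rw [Prod.norm_def]
      refine max_le ?_ ?_
      · simp only [F, Prod.fst_sub]
        rw [← smul_sub, norm_smul, Real.norm_of_nonneg hε.le]
        have := norm_nonneg (f p.1 p.2 (α s) - f q.1 q.2 (α s))
        nlinarith
      · simp only [F, Prod.snd_sub]
        linarith) hC (x, y)
  have hu0 : u 0 = (x, y) := by simpa using hue 0 le_rfl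
  have hξ : ∀ t, 0 ≤ t → (u t).1 = x + ε • ∫ s in (0:ℝ)..t, f (u s).1 (u s).2 (α s) := by
    intro t ht
    have h1 := congrArg Prod.fst (hue t ht)
    have h2 := (ContinuousLinearMap.fst ℝ (Euc N) (Euc M)).intervalIntegral_comp_comm
      (hintF u hu 0 t)
    rw [h1, Prod.fst_add, ← intervalIntegral.integral_smul]
    congr 1
    exact h2.symm
  have hη : ∀ t, 0 ≤ t → (u t).2 = y + ∫ s in (0:ℝ)..t, g (u s).1 (u s).2 (α s) := by
    intro t ht
    have h1 := congrArg Prod.snd (hue t ht)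
    have h2 := (ContinuousLinearMap.snd ℝ (Euc N) (Euc M)).intervalIntegral_comp_comm
      (hintF u hu 0 t)
    rw [h1, Prod.snd_add]
    congr 1
    exact h2.symm
  refine ⟨α, fun t => (u t).1, fun t => (u t).2, ⟨hα.1, hα.2.2⟩,
    ⟨fun t _ => hintf u hu 0 t, fun t _ => hintg u hu 0 t, ?_, ?_⟩, by simp only [hu0], by simp only [hu0], ?_⟩
  · intro t ht
    simp only [hu0]
    exact hξ t ht
  · intro t ht
    simp only [hu0]
    exact hη t ht
  have hxb : ∀ t ∈ Icc 0 S, ‖(u t).1 - x‖ ≤ ε * (Q0 * S) := by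
    intro t ht
    rw [hξ t ht.1, add_sub_cancel_left, norm_smul, Real.norm_of_nonneg hε.le]
    have := intervalIntegral.norm_integral_le_of_norm_le_const (a := 0) (b := t) (C := Q0)
      (f := fun s => f (u s).1 (u s).2 (α s)) (fun s _ => hfBdd _ _ _ (hα.2.2 s))
    rw [sub_zero, abs_of_nonneg ht.1] at this
    have h2 := ht.2
    gcongr
    exact this.trans (by gcongr)
  have hgr := gron (e := fun t => ‖(u t).2 - yb t‖) (D := ε + L0 * (ε * (Q0 * S)) * S) (L := L0)
    (S := S) (by have := hu.snd; fun_prop) (fun t => norm_nonneg _) hL0 hSpos.le (by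
      intro t ht
      have i1 := hintg u hu 0 t
      have i2 : IntervalIntegrable (fun s => g x (yb s) (α s)) volume 0 t :=
        hα.integrable (fun s a => g x (yb s) a) hG 0 t
      have e1 : (u t).2 - yb t = (∫ s in (0:ℝ)..t, (g (u s).1 (u s).2 (α s) - g x (yb s) (α s)))
          + ∫ s in (0:ℝ)..t, (g x (yb s) (α s) - v) := by
        rw [hη t ht.1, intervalIntegral.integral_sub i1 i2,
          intervalIntegral.integral_sub i2 (by simp)]
        simp only [yb, intervalIntegral.integral_const, sub_zero]
        abel
      have ec : Continuous fun s => ‖(u s).2 - yb s‖ := by have := hu.snd; fun_prop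
      have e2 : ‖∫ s in (0:ℝ)..t, (g (u s).1 (u s).2 (α s) - g x (yb s) (α s))‖ ≤
          ∫ s in (0:ℝ)..t, (L0 * (ε * (Q0 * S)) + L0 * ‖(u s).2 - yb s‖) := by
        refine intervalIntegral.norm_integral_le_of_norm_le ht.1 ?_ ?_
        · refine Filter.Eventually.of_forall fun s hs => ?_
          have h1 := hgLip (u s).1 x (u s).2 (yb s) (α s) (hα.2.2 s)
          have h2 := hxb s ⟨hs.1.le, hs.2.trans ht.2⟩
          nlinarith
        · exact Continuous.intervalIntegrable (by fun_prop) _ _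
      rw [intervalIntegral.integral_add (by simp)
        (Continuous.intervalIntegrable (by fun_prop) _ _),
        intervalIntegral.integral_const, intervalIntegral.integral_const_mul, sub_zero,
        smul_eq_mul] at e2
      have e3 := hαb t ht
      have e4 : t * (L0 * (ε * (Q0 * S))) ≤ S * (L0 * (ε * (Q0 * S))) := by
        have := ht.2
        gcongr
      change ‖(u t).2 - yb t‖ ≤ _
      rw [e1]
      refine (norm_add_le _ _).trans ?_
      linarith)
  simp only [ybS] at hgr
  refine hgr.trans (le_of_eq ?_)
  ring
end

section
/- Under assumptions (H1)–(H5), the family of value functions (V^ε)_{ε>0} is locally equibounded: for every bounded set C ⊆ ℝ^N × ℝ^M × [0,∞) there exists a constant M > 0 such that |V^ε(x,y,t)| ≤ M for every ε > 0 and every (x,y,t) ∈ C. -/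
open Set MeasureTheory Metric Filter
open scoped RealInnerProductSpace Topology

/-- Short-time solutions for a frozen control. -/
lemma aux_step {N M k : ℕ} {A : Set (Euc k)}
    {f : Euc N → Euc M → Euc k → Euc N} {g : Euc N → Euc M → Euc k → Euc M}
    {L0 : ℝ} (hL0 : 0 < L0)
    (hfLip : ∀ (x₁ x₂ : Euc N) (y₁ y₂ : Euc M), ∀ a ∈ A,
      ‖f x₁ y₁ a - f x₂ y₂ a‖ ≤ L0 * (‖x₁ - x₂‖ + ‖y₁ - y₂‖))
    (hgLip : ∀ (x₁ x₂ : Euc N) (y₁ y₂ : Euc M), ∀ a ∈ A,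
      ‖g x₁ y₁ a - g x₂ y₂ a‖ ≤ L0 * (‖x₁ - x₂‖ + ‖y₁ - y₂‖))
    {ε δ : ℝ} (hε : 0 < ε) (hδ : 0 < δ) (hδ1 : 4 * L0 * (1 + ε) * δ ≤ 1)
    {a : Euc k} (ha : a ∈ A) (z : Euc N × Euc M) :
    ∃ γ : ℝ → Euc N × Euc M, Continuous γ ∧ γ 0 = z ∧
      (∀ s ∈ Icc 0 δ, (γ s).1 = z.1 + ε • ∫ τ in (0:ℝ)..s, f (γ τ).1 (γ τ).2 a) ∧
      (∀ s ∈ Icc 0 δ, (γ s).2 = z.2 + ∫ τ in (0:ℝ)..s, g (γ τ).1 (γ τ).2 a) ∧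
      (Continuous fun τ => f (γ τ).1 (γ τ).2 a) ∧
      (Continuous fun τ => g (γ τ).1 (γ τ).2 a) ∧
      (∀ s, ‖γ s - z‖ ≤ 2 * δ * ‖((ε • f z.1 z.2 a, g z.1 z.2 a) : Euc N × Euc M)‖) ∧
      ‖(γ δ).2 - z.2 - δ • g z.1 z.2 a‖ ≤
        δ * (L0 * (2 * (2 * δ * ‖((ε • f z.1 z.2 a, g z.1 z.2 a) : Euc N × Euc M)‖))) := by
  set F : Euc N × Euc M → Euc N × Euc M := fun w => (ε • f w.1 w.2 a, g w.1 w.2 a) with hF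
  have hfl : ∀ w w' : Euc N × Euc M, ‖f w.1 w.2 a - f w'.1 w'.2 a‖ ≤ 2 * L0 * ‖w - w'‖ := by
    intro w w'
    have h1 := norm_fst_le (w - w')
    have h2 := norm_snd_le (w - w')
    have := hfLip w.1 w'.1 w.2 w'.2 a ha
    simp only [Prod.fst_sub, Prod.snd_sub] at h1 h2
    nlinarith
  have hgl : ∀ w w' : Euc N × Euc M, ‖g w.1 w.2 a - g w'.1 w'.2 a‖ ≤ 2 * L0 * ‖w - w'‖ := by
    intro w w'
    have h1 := norm_fst_le (w - w')
    have h2 := norm_snd_le (w - w')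
    have := hgLip w.1 w'.1 w.2 w'.2 a ha
    simp only [Prod.fst_sub, Prod.snd_sub] at h1 h2
    nlinarith
  have hfc : Continuous fun w : Euc N × Euc M => f w.1 w.2 a :=
    (LipschitzWith.of_dist_le_mul (K := (2 * L0).toNNReal) (fun w w' => by
      rw [dist_eq_norm, dist_eq_norm, Real.coe_toNNReal _ (by positivity)]
      exact hfl w w')).continuous
  have hgc : Continuous fun w : Euc N × Euc M => g w.1 w.2 a :=
    (LipschitzWith.of_dist_le_mul (K := (2 * L0).toNNReal) (fun w w' => by
      rw [dist_eq_norm, dist_eq_norm, Real.coe_toNNReal _ (by positivity)]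
      exact hgl w w')).continuous
  have hFl : ∀ w w' : Euc N × Euc M, ‖F w - F w'‖ ≤ 2 * L0 * (1 + ε) * ‖w - w'‖ := by
    intro w w'
    have h0 := norm_nonneg (w - w')
    have h3 : 0 ≤ L0 * ε * ‖w - w'‖ := by positivity
    have h4 : 0 ≤ L0 * ‖w - w'‖ := by positivity
    refine max_le ?_ ?_
    · have : (F w - F w').1 = ε • (f w.1 w.2 a - f w'.1 w'.2 a) := by
        simp [hF, smul_sub]
      rw [this, norm_smul, Real.norm_of_nonneg hε.le]
      have := mul_le_mul_of_nonneg_left (hfl w w') hε.le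
      nlinarith
    · have := hgl w w'
      change ‖g w.1 w.2 a - g w'.1 w'.2 a‖ ≤ _
      nlinarith
  have hFL : LipschitzWith (2 * L0 * (1 + ε)).toNNReal F := LipschitzWith.of_dist_le_mul (fun w w' => by
      rw [dist_eq_norm, dist_eq_norm, Real.coe_toNNReal _ (by positivity)]
      exact hFl w w')
  set R : ℝ := 2 * δ * ‖F z‖ with hR
  have hR0 : 0 ≤ R := by positivity
  have hPL : IsPicardLindelof (fun _ : ℝ => F) (tmin := 0) (tmax := δ)
      (⟨0, le_rfl, hδ.le⟩ : Icc (0:ℝ) δ) z R.toNNReal 0 (2 * ‖F z‖).toNNReal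
      (2 * L0 * (1 + ε)).toNNReal := by
    refine ⟨fun t _ => hFL.lipschitzOnWith, fun x _ => continuousOn_const, ?_, ?_⟩
    · intro t _ x hx
      rw [Real.coe_toNNReal _ (by positivity)]
      rw [mem_closedBall, dist_eq_norm, Real.coe_toNNReal _ hR0] at hx
      have h1 := hFl x z
      have h2 : ‖F x‖ ≤ ‖F z‖ + ‖F x - F z‖ := norm_le_norm_add_norm_sub' _ _
      have h3 : 2 * L0 * (1 + ε) * ‖x - z‖ ≤ 2 * L0 * (1 + ε) * R := by gcongr
      have h4 : 2 * L0 * (1 + ε) * R = (4 * L0 * (1 + ε) * δ) * ‖F z‖ := by rw [hR]; ring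
      have h5 : (4 * L0 * (1 + ε) * δ) * ‖F z‖ ≤ 1 * ‖F z‖ := by gcongr
      linarith
    · rw [Real.coe_toNNReal _ (by positivity), Real.coe_toNNReal _ hR0]
      simp only [sub_zero, sub_self, NNReal.coe_zero]
      rw [max_eq_left hδ.le, hR]
      linarith
  obtain ⟨β, hβ⟩ := ODE.FunSpace.exists_isFixedPt_next hPL (mem_closedBall_self le_rfl)
  have hγc : Continuous β.compProj := β.continuous_compProj
  have hpic : ∀ s ∈ Icc 0 δ, β.compProj s = z + ∫ τ in (0:ℝ)..s, F (β.compProj τ) := by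
    intro s hs
    nth_rw 1 [← hβ]
    rw [ODE.FunSpace.compProj_of_mem hs, ODE.FunSpace.next_apply]
    rfl
  have hball : ∀ s, ‖β.compProj s - z‖ ≤ R := by
    intro s
    have := β.compProj_mem_closedBall hPL.mul_max_le (t := s)
    rwa [mem_closedBall, dist_eq_norm, Real.coe_toNNReal _ hR0] at this
  generalize β.compProj = γ at hγc hpic hball
  have hFc : Continuous fun τ => F (γ τ) := hFL.continuous.comp hγc
  have h2 : ∀ s ∈ Icc 0 δ, (γ s).2 = z.2 + ∫ τ in (0:ℝ)..s, g (γ τ).1 (γ τ).2 a := by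
    intro s hs
    have := (ContinuousLinearMap.snd ℝ (Euc N) (Euc M)).intervalIntegral_comp_comm
      (hFc.intervalIntegrable (μ := volume) 0 s)
    rw [hpic s hs, Prod.snd_add]
    exact congrArg (z.2 + ·) this.symm
  have hgγ : Continuous fun τ => g (γ τ).1 (γ τ).2 a := hgc.comp hγc
  refine ⟨γ, hγc, ?_, ?_, h2, hfc.comp hγc, hgγ, hball, ?_⟩
  · simpa using hpic 0 ⟨le_rfl, hδ.le⟩
  · intro s hs
    have := (ContinuousLinearMap.fst ℝ (Euc N) (Euc M)).intervalIntegral_comp_comm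
      (hFc.intervalIntegrable (μ := volume) 0 s)
    rw [hpic s hs, Prod.fst_add, ← intervalIntegral.integral_smul]
    exact congrArg (z.1 + ·) this.symm
  · have e : (γ δ).2 - z.2 - δ • g z.1 z.2 a
        = ∫ τ in (0:ℝ)..δ, (g (γ τ).1 (γ τ).2 a - g z.1 z.2 a) := by
      rw [intervalIntegral.integral_sub (hgγ.intervalIntegrable _ _) (by simp), h2 δ ⟨hδ.le, le_rfl⟩]
      simp
    rw [e]
    have := intervalIntegral.norm_integral_le_of_norm_le_const (a := 0) (b := δ)
      (f := fun τ => g (γ τ).1 (γ τ).2 a - g z.1 z.2 a) (C := L0 * (2 * R)) (by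
        intro τ _
        have h1 := hgl (γ τ) z
        have h3 := mul_le_mul_of_nonneg_left (hball τ) hL0.le
        linarith)
    rw [sub_zero, abs_of_pos hδ] at this
    linarith

lemma aux_floor {δ : ℝ} (hδ : 0 < δ) (n : ℕ) {s : ℝ} (h1 : n * δ ≤ s) (h2 : s < (n + 1) * δ) :
    ⌊s / δ⌋₊ = n := by
  have : 0 ≤ s := le_trans (by positivity) h1
  rw [Nat.floor_eq_iff (by positivity)]
  exact ⟨by rwa [le_div_iff₀ hδ], by rwa [div_lt_iff₀ hδ]⟩

lemma aux_paste_piece {E : Type*} [NormedAddCommGroup E] [NormedSpace ℝ E]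
    {δ : ℝ} (hδ : 0 < δ) {H : ℕ → ℝ → E} (hH : ∀ n, Continuous (H n)) {h : ℝ → E}
    (hh : ∀ s, 0 ≤ s → h s = H ⌊s / δ⌋₊ (s - ⌊s / δ⌋₊ * δ)) (n : ℕ) {t : ℝ}
    (h1 : n * δ ≤ t) (h2 : t ≤ (n + 1) * δ) :
    IntervalIntegrable h volume (n * δ) t ∧
      ∫ s in (n * δ)..t, h s = ∫ s in (0:ℝ)..(t - n * δ), H n s := by
  have heq : EqOn (fun s => H n (s - n * δ)) h (uIoo (n * δ) t) := by
    intro s hs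
    rw [uIoo_of_le h1] at hs
    have hs0 : 0 ≤ s := le_trans (by positivity) hs.1.le
    have := aux_floor hδ n hs.1.le (hs.2.trans_le h2)
    simp only
    rw [hh s hs0, this]
  constructor
  · exact IntervalIntegrable.congr_uIoo
      (Continuous.intervalIntegrable ((hH n).comp (by fun_prop)) _ _) heq
  · rw [← intervalIntegral.integral_congr_uIoo heq, intervalIntegral.integral_comp_sub_right (H n)]
    simp

lemma aux_paste_int {E : Type*} [NormedAddCommGroup E] [NormedSpace ℝ E]
    {δ : ℝ} (hδ : 0 < δ) {H : ℕ → ℝ → E} (hH : ∀ n, Continuous (H n)) {h : ℝ → E}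
    (hh : ∀ s, 0 ≤ s → h s = H ⌊s / δ⌋₊ (s - ⌊s / δ⌋₊ * δ)) {t : ℝ} (ht : 0 ≤ t) :
    IntervalIntegrable h volume 0 t := by
  have key : ∀ n : ℕ, IntervalIntegrable h volume 0 (n * δ) := by
    intro n
    induction n with
    | zero => simp
    | succ n ih =>
      refine ih.trans ?_
      push_cast
      exact (aux_paste_piece hδ hH hh n (by nlinarith) le_rfl).1
  refine (key ⌊t / δ⌋₊).trans (aux_paste_piece hδ hH hh _ ?_ ?_).1
  · rw [← le_div_iff₀ hδ]; exact Nat.floor_le (by positivity)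
  · rw [← div_le_iff₀ hδ]; exact (Nat.lt_floor_add_one _).le

lemma aux_paste {E : Type*} [NormedAddCommGroup E] [NormedSpace ℝ E]
    {δ : ℝ} (hδ : 0 < δ) {H : ℕ → ℝ → E} (hH : ∀ n, Continuous (H n)) {h : ℝ → E}
    (hh : ∀ s, 0 ≤ s → h s = H ⌊s / δ⌋₊ (s - ⌊s / δ⌋₊ * δ))
    (c : ℝ) (z : ℕ → E) (hz : ∀ n, z (n + 1) = z n + c • ∫ s in (0:ℝ)..δ, H n s)
    {t : ℝ} (ht : 0 ≤ t) :
    z ⌊t / δ⌋₊ + c • ∫ s in (0:ℝ)..(t - ⌊t / δ⌋₊ * δ), H ⌊t / δ⌋₊ s =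
      z 0 + c • ∫ s in (0:ℝ)..t, h s := by
  have key : ∀ n : ℕ, z n = z 0 + c • ∫ s in (0:ℝ)..(n * δ), h s := by
    intro n
    induction n with
    | zero => simp
    | succ n ih =>
      have hp := aux_paste_piece hδ hH hh n (t := (n + 1) * δ) (by nlinarith) le_rfl
      rw [hz n, ih]
      push_cast
      rw [← intervalIntegral.integral_add_adjacent_intervals
        (aux_paste_int hδ hH hh (by positivity)) hp.1, hp.2, smul_add, ← add_assoc]
      congr 4
      ring
  have h1 : (⌊t / δ⌋₊ : ℝ) * δ ≤ t := by
    rw [← le_div_iff₀ hδ]; exact Nat.floor_le (by positivity)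
  have h2 : t ≤ ((⌊t / δ⌋₊ : ℝ) + 1) * δ := by
    rw [← div_le_iff₀ hδ]; exact (Nat.lt_floor_add_one _).le
  have hp := aux_paste_piece hδ hH hh _ h1 h2
  rw [key ⌊t / δ⌋₊, ← hp.2, add_assoc, ← smul_add, intervalIntegral.integral_add_adjacent_intervals
        (aux_paste_int hδ hH hh (by positivity)) hp.1]

/-- Sample-and-hold trajectories. -/
lemma aux_traj {N M k : ℕ} {A : Set (Euc k)}
    {f : Euc N → Euc M → Euc k → Euc N} {g : Euc N → Euc M → Euc k → Euc M}
    {L0 : ℝ} (hL0 : 0 < L0)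
    (hfLip : ∀ (x₁ x₂ : Euc N) (y₁ y₂ : Euc M), ∀ a ∈ A,
      ‖f x₁ y₁ a - f x₂ y₂ a‖ ≤ L0 * (‖x₁ - x₂‖ + ‖y₁ - y₂‖))
    (hgLip : ∀ (x₁ x₂ : Euc N) (y₁ y₂ : Euc M), ∀ a ∈ A,
      ‖g x₁ y₁ a - g x₂ y₂ a‖ ≤ L0 * (‖x₁ - x₂‖ + ‖y₁ - y₂‖))
    {ε δ : ℝ} (hε : 0 < ε) (hδ : 0 < δ) (hδ1 : 4 * L0 * (1 + ε) * δ ≤ 1)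
    (pol : Euc N × Euc M → Euc k) (hpol : ∀ z, pol z ∈ A) (z0 : Euc N × Euc M)
    (ℓ : Euc N → Euc M → Euc k → ℝ)
    (hlCont : Continuous fun z : Euc N × Euc M × Euc k => ℓ z.1 z.2.1 z.2.2) :
    ∃ (α : ℝ → Euc k) (ξ : ℝ → Euc N) (η : ℝ → Euc M) (zs : ℕ → Euc N × Euc M),
      IsControl A α ∧ IsTrajectory f g ε α ξ η ∧ ξ 0 = z0.1 ∧ η 0 = z0.2 ∧
      (∀ t, 0 ≤ t → IntervalIntegrable (fun s => ℓ (ξ s) (η s) (α s)) volume 0 t) ∧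
      zs 0 = z0 ∧ (∀ n : ℕ, ξ (n * δ) = (zs n).1) ∧
      (∀ s, ‖η s - (zs ⌊s / δ⌋₊).2‖ ≤ 2 * δ * ‖((ε • f (zs ⌊s / δ⌋₊).1 (zs ⌊s / δ⌋₊).2
        (pol (zs ⌊s / δ⌋₊)), g (zs ⌊s / δ⌋₊).1 (zs ⌊s / δ⌋₊).2 (pol (zs ⌊s / δ⌋₊))) :
          Euc N × Euc M)‖) ∧
      (∀ n, ‖(zs (n + 1)).2 - (zs n).2‖ ≤ 2 * δ * ‖((ε • f (zs n).1 (zs n).2 (pol (zs n)),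
        g (zs n).1 (zs n).2 (pol (zs n))) : Euc N × Euc M)‖) ∧
      (∀ n, ‖(zs (n + 1)).2 - (zs n).2 - δ • g (zs n).1 (zs n).2 (pol (zs n))‖ ≤
        δ * (L0 * (2 * (2 * δ * ‖((ε • f (zs n).1 (zs n).2 (pol (zs n)),
        g (zs n).1 (zs n).2 (pol (zs n))) : Euc N × Euc M)‖)))) := by
  choose Γ hc h0 h1 h2 hfc hgc hb he using
    fun z => aux_step hL0 hfLip hgLip hε hδ hδ1 (hpol z) z
  let zs : ℕ → Euc N × Euc M := fun n => Nat.rec z0 (fun _ w => Γ w δ) n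
  have zs1 : ∀ n, zs (n + 1) = Γ (zs n) δ := fun n => rfl
  have hmem : δ ∈ Icc 0 δ := ⟨hδ.le, le_rfl⟩
  have hrem : ∀ t, 0 ≤ t → t - ⌊t / δ⌋₊ * δ ∈ Icc 0 δ := by
    intro t ht
    have h1 : (⌊t / δ⌋₊ : ℝ) * δ ≤ t := by
      rw [← le_div_iff₀ hδ]; exact Nat.floor_le (by positivity)
    have h2 : t ≤ ((⌊t / δ⌋₊ : ℝ) + 1) * δ := by
      rw [← div_le_iff₀ hδ]; exact (Nat.lt_floor_add_one _).le
    constructor <;> linarith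
  have hst : ∀ n : ℕ, Γ (zs ⌊(n * δ) / δ⌋₊) (n * δ - ⌊(n * δ) / δ⌋₊ * δ) = zs n := by
    intro n
    rw [aux_floor hδ n le_rfl (by linarith), sub_self, h0]
  have hst0 : Γ (zs ⌊(0:ℝ) / δ⌋₊) (0 - ⌊(0:ℝ) / δ⌋₊ * δ) = z0 := by
    have := hst 0
    have e : zs 0 = z0 := rfl
    simp only [CharP.cast_eq_zero, zero_mul] at this
    rw [this, e]
  refine ⟨fun s => pol (zs ⌊s / δ⌋₊), fun s => (Γ (zs ⌊s / δ⌋₊) (s - ⌊s / δ⌋₊ * δ)).1,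
    fun s => (Γ (zs ⌊s / δ⌋₊) (s - ⌊s / δ⌋₊ * δ)).2, zs, ⟨?_, fun t => hpol _⟩,
    ⟨?_, ?_, ?_, ?_⟩, ?_, ?_, ?_, rfl, ?_, ?_, ?_, ?_⟩
  · exact (measurable_from_nat (f := fun n => pol (zs n))).comp
      (Nat.measurable_floor.comp (by fun_prop))
  · intro t ht
    exact aux_paste_int hδ (H := fun n τ => f (Γ (zs n) τ).1 (Γ (zs n) τ).2 (pol (zs n)))
      (fun n => hfc _) (fun s _ => rfl) ht
  · intro t ht
    exact aux_paste_int hδ (H := fun n τ => g (Γ (zs n) τ).1 (Γ (zs n) τ).2 (pol (zs n)))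
      (fun n => hgc _) (fun s _ => rfl) ht
  · intro t ht
    simp only [hst0]
    rw [h1 _ _ (hrem t ht)]
    exact aux_paste hδ (H := fun n τ => f (Γ (zs n) τ).1 (Γ (zs n) τ).2 (pol (zs n)))
      (fun n => hfc _) (fun s _ => rfl) ε (fun n => (zs n).1)
      (fun n => by rw [zs1, h1 _ _ hmem]) ht
  · intro t ht
    simp only [hst0]
    rw [h2 _ _ (hrem t ht)]
    have := aux_paste hδ (H := fun n τ => g (Γ (zs n) τ).1 (Γ (zs n) τ).2 (pol (zs n)))
      (h := fun s => g (Γ (zs ⌊s / δ⌋₊) (s - ⌊s / δ⌋₊ * δ)).1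
        (Γ (zs ⌊s / δ⌋₊) (s - ⌊s / δ⌋₊ * δ)).2 (pol (zs ⌊s / δ⌋₊)))
      (fun n => hgc _) (fun s _ => rfl) 1 (fun n => (zs n).2)
      (fun n => by rw [zs1, h2 _ _ hmem, one_smul]) ht
    rw [one_smul, one_smul] at this
    exact this
  · simp only [hst0]
  · simp only [hst0]
  · intro t ht
    refine aux_paste_int hδ (H := fun n τ => ℓ (Γ (zs n) τ).1 (Γ (zs n) τ).2 (pol (zs n)))
      (fun n => ?_) (fun s _ => rfl) ht
    have := hc (zs n)
    exact hlCont.comp (g := fun z : Euc N × Euc M × Euc k => ℓ z.1 z.2.1 z.2.2)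
      (f := fun τ => ((Γ (zs n) τ).1, (Γ (zs n) τ).2, pol (zs n))) (by fun_prop)
  · intro n
    simp only [hst]
  · intro s
    exact (norm_snd_le _).trans (hb (zs ⌊s / δ⌋₊) (s - ⌊s / δ⌋₊ * δ))
  · intro n
    rw [zs1]
    exact (norm_snd_le _).trans (hb (zs n) δ)
  · intro n
    rw [zs1]
    exact he (zs n)

/-- Selection of a control pushing `y` inwards, with a locally uniform bound on the speed. -/
lemma aux_policy {N M k : ℕ} {A : Set (Euc k)} (hAne : A.Nonempty)
    {g : Euc N → Euc M → Euc k → Euc M}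
    {L0 : ℝ} (hL0 : 0 < L0)
    (hgLip : ∀ (x₁ x₂ : Euc N) (y₁ y₂ : Euc M), ∀ a ∈ A,
      ‖g x₁ y₁ a - g x₂ y₂ a‖ ≤ L0 * (‖x₁ - x₂‖ + ‖y₁ - y₂‖))
    {K : Set (Euc N × Euc M)} (hK : IsCompact K) {r : ℝ} (hr : 0 < r)
    (hball : ∀ z ∈ K,
      Metric.ball (0 : Euc M) r ⊆ closure (convexHull ℝ ((fun a => g z.1 z.2 a) '' A))) :
    ∃ G : ℝ, ∀ z ∈ K, ∃ a ∈ A, (1 ≤ ‖z.2‖ → ⟪g z.1 z.2 a, z.2⟫ ≤ -(r / 2) * ‖z.2‖) ∧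
      ‖g z.1 z.2 a‖ ≤ G := by
  have hgc : ∀ a ∈ A, Continuous fun w : Euc N × Euc M => g w.1 w.2 a := by
    intro a ha
    refine (LipschitzWith.of_dist_le_mul (K := (2 * L0).toNNReal) (fun w w' => ?_)).continuous
    rw [dist_eq_norm, dist_eq_norm, Real.coe_toNNReal _ (by positivity)]
    have h1 := norm_fst_le (w - w')
    have h2 := norm_snd_le (w - w')
    have := hgLip w.1 w'.1 w.2 w'.2 a ha
    simp only [Prod.fst_sub, Prod.snd_sub] at h1 h2
    nlinarith
  refine hK.induction_on (p := fun S => ∃ G : ℝ, ∀ z ∈ S, ∃ a ∈ A,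
    (1 ≤ ‖z.2‖ → ⟪g z.1 z.2 a, z.2⟫ ≤ -(r / 2) * ‖z.2‖) ∧ ‖g z.1 z.2 a‖ ≤ G) ?_ ?_ ?_ ?_
  · exact ⟨0, fun z hz => hz.elim⟩
  · rintro s t hst ⟨G, hG⟩
    exact ⟨G, fun z hz => hG z (hst hz)⟩
  · rintro s t ⟨G, hG⟩ ⟨G', hG'⟩
    refine ⟨max G G', fun z hz => ?_⟩
    rcases hz with hz | hz
    · obtain ⟨a, ha, h1, h2⟩ := hG z hz
      exact ⟨a, ha, h1, h2.trans (le_max_left _ _)⟩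
    · obtain ⟨a, ha, h1, h2⟩ := hG' z hz
      exact ⟨a, ha, h1, h2.trans (le_max_right _ _)⟩
  · intro p hp
    have hbd : ∀ a ∈ A, ∀ᶠ z in 𝓝 p, ‖g z.1 z.2 a‖ ≤ ‖g p.1 p.2 a‖ + 1 := by
      intro a ha
      have := ((hgc a ha).norm.tendsto p).eventually (eventually_lt_nhds (lt_add_one _))
      exact this.mono fun z hz => hz.le
    by_cases h0 : p.2 = 0
    · obtain ⟨a, ha⟩ := hAne
      have h1 : ∀ᶠ z : Euc N × Euc M in 𝓝 p, ‖z.2‖ < 1 := by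
        have : Continuous fun z : Euc N × Euc M => ‖z.2‖ := by fun_prop
        exact (this.tendsto p).eventually (eventually_lt_nhds (by simp [h0]))
      refine ⟨{z | ‖z.2‖ < 1 ∧ ‖g z.1 z.2 a‖ ≤ ‖g p.1 p.2 a‖ + 1},
        mem_nhdsWithin_of_mem_nhds (h1.and (hbd a ha)), ‖g p.1 p.2 a‖ + 1, fun z hz => ?_⟩
      exact ⟨a, ha, fun h => absurd h (not_le.2 hz.1), hz.2⟩
    · have hn : 0 < ‖p.2‖ := norm_pos_iff.2 h0
      have hex : ∃ a ∈ A, ⟪g p.1 p.2 a, p.2⟫ < -(r / 2) * ‖p.2‖ := by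
        by_contra! hcon
        have hcl : IsClosed {v : Euc M | -(r / 2) * ‖p.2‖ ≤ ⟪v, p.2⟫} :=
          isClosed_le continuous_const (by fun_prop)
        have hcv : Convex ℝ {v : Euc M | -(r / 2) * ‖p.2‖ ≤ ⟪v, p.2⟫} := by
          intro v hv w hw s t hs ht hst
          simp only [mem_ofPred_eq, inner_add_left, real_inner_smul_left] at *
          have := mul_le_mul_of_nonneg_left hv hs
          have := mul_le_mul_of_nonneg_left hw ht
          calc -(r / 2) * ‖p.2‖ = s * (-(r / 2) * ‖p.2‖) + t * (-(r / 2) * ‖p.2‖) := by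
                rw [← add_mul, hst, one_mul]
            _ ≤ _ := by linarith
        have hsub : closure (convexHull ℝ ((fun a => g p.1 p.2 a) '' A)) ⊆
            {v : Euc M | -(r / 2) * ‖p.2‖ ≤ ⟪v, p.2⟫} := by
          refine closure_minimal (convexHull_min ?_ hcv) hcl
          rintro _ ⟨a, ha, rfl⟩
          exact hcon a ha
        have hm : (-(3 * r / 4 / ‖p.2‖)) • p.2 ∈ Metric.ball (0 : Euc M) r := by
          rw [mem_ball_zero_iff, norm_smul, norm_neg, Real.norm_of_nonneg (by positivity),
            div_mul_cancel₀ _ hn.ne']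
          linarith
        have := hsub (hball p hp hm)
        rw [mem_ofPred_eq, real_inner_smul_left, real_inner_self_eq_norm_sq] at this
        have e : -(3 * r / 4 / ‖p.2‖) * ‖p.2‖ ^ 2 = -(3 * r / 4) * ‖p.2‖ := by
          field_simp
        rw [e] at this
        nlinarith
      obtain ⟨a, ha, hlt⟩ := hex
      have h1 : ∀ᶠ z : Euc N × Euc M in 𝓝 p, ⟪g z.1 z.2 a, z.2⟫ < -(r / 2) * ‖z.2‖ := by
        have hc := hgc a ha
        have c1 : Continuous fun z : Euc N × Euc M => ⟪g z.1 z.2 a, z.2⟫ := hc.inner continuous_snd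
        have c2 : Continuous fun z : Euc N × Euc M => -(r / 2) * ‖z.2‖ := by fun_prop
        exact c1.continuousAt.eventually_lt c2.continuousAt hlt
      refine ⟨{z | ⟪g z.1 z.2 a, z.2⟫ < -(r / 2) * ‖z.2‖ ∧ ‖g z.1 z.2 a‖ ≤ ‖g p.1 p.2 a‖ + 1},
        mem_nhdsWithin_of_mem_nhds (h1.and (hbd a ha)), ‖g p.1 p.2 a‖ + 1, fun z hz => ?_⟩
      exact ⟨a, ha, fun h => hz.1.le, hz.2⟩

/-- The slow variable moves at speed at most `ε Q0`. -/
lemma aux_slow {N M k : ℕ} {A : Set (Euc k)}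
    {f : Euc N → Euc M → Euc k → Euc N} {g : Euc N → Euc M → Euc k → Euc M} {Q0 : ℝ}
    (hfBdd : ∀ x y, ∀ a ∈ A, ‖f x y a‖ ≤ Q0) {ε : ℝ} (hε : 0 < ε)
    {α : ℝ → Euc k} {ξ : ℝ → Euc N} {η : ℝ → Euc M}
    (hα : IsControl A α) (hT : IsTrajectory f g ε α ξ η) {t s : ℝ} (hs : 0 ≤ s) (hst : s ≤ t / ε)
    (hQ0 : 0 < Q0) :
    ‖ξ s‖ ≤ ‖ξ 0‖ + Q0 * t := by
  have h1 := intervalIntegral.norm_integral_le_of_norm_le_const (a := 0) (b := s)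
    (f := fun τ => f (ξ τ) (η τ) (α τ)) (C := Q0) (fun τ _ => hfBdd _ _ _ (hα.2 τ))
  rw [sub_zero, abs_of_nonneg hs] at h1
  rw [hT.2.2.1 s hs]
  refine (norm_add_le _ _).trans ?_
  rw [norm_smul, Real.norm_of_nonneg hε.le]
  have h2 := mul_le_mul_of_nonneg_left h1 hε.le
  rw [le_div_iff₀ hε] at hst
  have h3 := mul_le_mul_of_nonneg_left hst hQ0.le
  linarith

/-- One step of the sample-and-hold scheme does not increase `‖y‖` when `‖y‖ ≥ 1`. -/
lemma aux_decrease {M : ℕ} {y v w : Euc M} {δ c G : ℝ} (hδ : 0 < δ) (hc : 0 < c)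
    (hy : 1 ≤ ‖y‖) (hv : ⟪v, y⟫ ≤ -c * ‖y‖) (hG : ‖v‖ ≤ G) (hδG : G ^ 2 * δ ≤ c)
    (hδc : c * δ ≤ 2) (hw : ‖w - y - δ • v‖ ≤ δ * (c / 2)) : ‖w‖ ≤ ‖y‖ := by
  have h1 : ‖y + δ • v‖ ≤ ‖y‖ - δ * (c / 2) := by
    have h2 : ‖y + δ • v‖ ^ 2 ≤ (‖y‖ - δ * (c / 2)) ^ 2 := by
      rw [norm_add_sq_real, real_inner_smul_right, real_inner_comm, norm_smul,
        Real.norm_of_nonneg hδ.le]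
      have h3 : ‖v‖ ^ 2 ≤ G ^ 2 := by gcongr
      have h4 : ‖v‖ ^ 2 * δ ≤ c := by nlinarith
      have h5 : δ * ⟪v, y⟫ ≤ δ * (-c * ‖y‖) := mul_le_mul_of_nonneg_left hv hδ.le
      have h6 : δ * (‖v‖ ^ 2 * δ) ≤ δ * c := mul_le_mul_of_nonneg_left h4 hδ.le
      have h7 : δ * c * 1 ≤ δ * c * ‖y‖ := mul_le_mul_of_nonneg_left hy (by positivity)
      nlinarith [sq_nonneg (δ * (c / 2))]
    exact abs_le_of_sq_le_sq' h2 (by nlinarith) |>.2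
  have e : w = (y + δ • v) + (w - y - δ • v) := by abel
  rw [e]
  refine (norm_add_le _ _).trans ?_
  linarith

theorem statement6
    {N M k : ℕ} (A : Set (Euc k)) (hA : IsCompact A) (hAne : A.Nonempty)
    (f : Euc N → Euc M → Euc k → Euc N) (g : Euc N → Euc M → Euc k → Euc M)
    (L0 Q0 : ℝ) (hL0 : 0 < L0) (hQ0 : 0 < Q0)
    (hfLip : ∀ (x₁ x₂ : Euc N) (y₁ y₂ : Euc M), ∀ a ∈ A,
      ‖f x₁ y₁ a - f x₂ y₂ a‖ ≤ L0 * (‖x₁ - x₂‖ + ‖y₁ - y₂‖))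
    (hgLip : ∀ (x₁ x₂ : Euc N) (y₁ y₂ : Euc M), ∀ a ∈ A,
      ‖g x₁ y₁ a - g x₂ y₂ a‖ ≤ L0 * (‖x₁ - x₂‖ + ‖y₁ - y₂‖))
    (hfBdd : ∀ x y, ∀ a ∈ A, ‖f x y a‖ ≤ Q0)
    (hctrl : ∀ K : Set (Euc N × Euc M), IsCompact K → ∃ r > 0, ∀ z ∈ K,
      Metric.ball (0 : Euc M) r ⊆ closure (convexHull ℝ ((fun a => g z.1 z.2 a) '' A)))
    (ℓ : Euc N → Euc M → Euc k → ℝ)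
    (hlCont : Continuous fun z : Euc N × Euc M × Euc k => ℓ z.1 z.2.1 z.2.2)
    (hlCoer : ∀ B : Set (Euc N), IsCompact B → ∀ c : ℝ, ∃ R : ℝ,
      ∀ y : Euc M, R < ‖y‖ → ∀ x ∈ B, ∀ a ∈ A, c < ℓ x y a)
    (u0 : Euc N → Euc M → ℝ)
    (hu0Cont : Continuous fun z : Euc N × Euc M => u0 z.1 z.2)
    (hu0Bdd : ∀ x y, -Q0 ≤ u0 x y)
 :
    LocEquibounded (valueFun A f g ℓ u0) := by
  classical
  intro C hC
  obtain ⟨R, hR0, hR⟩ := hC.exists_pos_norm_le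
  set Rx : ℝ := R + Q0 * R with hRx
  set R1 : ℝ := max R 2 with hR1
  have hR1R : R ≤ R1 := le_max_left _ _
  have hR12 : 2 ≤ R1 := le_max_right _ _
  have hK : IsCompact (closedBall (0 : Euc N) Rx ×ˢ closedBall (0 : Euc M) R1) :=
    (isCompact_closedBall _ _).prod (isCompact_closedBall _ _)
  obtain ⟨r, hr, hball⟩ := hctrl _ hK
  obtain ⟨G, hG⟩ := aux_policy hAne hL0 hgLip hK hr hball
  obtain ⟨Bl, hBl⟩ := ((isCompact_closedBall (0 : Euc N) Rx).prod
    ((isCompact_closedBall (0 : Euc M) (R1 + 1)).prod hA)).exists_bound_of_continuousOn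
    hlCont.continuousOn
  obtain ⟨Bu, hBu⟩ := ((isCompact_closedBall (0 : Euc N) Rx).prod
    (isCompact_closedBall (0 : Euc M) (R1 + 1))).exists_bound_of_continuousOn
    hu0Cont.continuousOn
  obtain ⟨RL, hRL⟩ := hlCoer _ (isCompact_closedBall (0 : Euc N) Rx) 0
  obtain ⟨m, hm⟩ := ((isCompact_closedBall (0 : Euc N) Rx).prod
    ((isCompact_closedBall (0 : Euc M) RL).prod hA)).exists_bound_of_continuousOn
    hlCont.continuousOn
  have hlow : ∀ x y a, ‖x‖ ≤ Rx → a ∈ A → -|m| ≤ ℓ x y a := by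
    intro x y a hx ha
    by_cases hy : RL < ‖y‖
    · have := hRL y hy x (by simpa using hx) a ha
      have := abs_nonneg m
      linarith
    · have := hm (x, y, a) ⟨by simpa using hx, by simpa using hy, ha⟩
      have h2 := neg_abs_le (ℓ x y a)
      have h3 := le_abs_self m
      rw [Real.norm_eq_abs] at this
      simp only at this
      linarith
  refine ⟨max (R * |Bl| + Bu) (R * |m| + Q0), ?_⟩
  rintro ε hε ⟨x, y, t⟩ hz ht
  simp only at ht ⊢
  have hn := hR _ hz
  have hx : ‖x‖ ≤ R := (norm_fst_le _).trans hn
  have hyt := (norm_snd_le _).trans hn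
  have hy : ‖y‖ ≤ R := (norm_fst_le _).trans hyt
  have htR : t ≤ R := (le_abs_self t).trans ((norm_snd_le _).trans hyt)
  have htε : 0 ≤ t / ε := by positivity
  have hslow : ∀ {α : ℝ → Euc k} {ξ : ℝ → Euc N} {η : ℝ → Euc M}, IsControl A α →
      IsTrajectory f g ε α ξ η → ξ 0 = x → ∀ s, 0 ≤ s → s ≤ t / ε → ‖ξ s‖ ≤ Rx := by
    intro α ξ η hα hT h0 s hs hst
    have := aux_slow hfBdd hε hα hT hs hst hQ0
    rw [h0] at this
    have := mul_le_mul_of_nonneg_left htR hQ0.le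
    linarith
  -- the lower bound
  have hLB : ∀ v ∈ { v : ℝ | ∃ (α : ℝ → Euc k) (ξ : ℝ → Euc N) (η : ℝ → Euc M),
      IsControl A α ∧ IsTrajectory f g ε α ξ η ∧ ξ 0 = x ∧ η 0 = y ∧
      IntervalIntegrable (fun s => ℓ (ξ s) (η s) (α s)) volume 0 (t / ε) ∧
      v = ε * (∫ s in (0:ℝ)..(t / ε), ℓ (ξ s) (η s) (α s)) + u0 (ξ (t / ε)) (η (t / ε)) },
      -(R * |m| + Q0) ≤ v := by
    rintro v ⟨α, ξ, η, hα, hT, h0, -, hint, rfl⟩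
    have h1 : ∫ s in (0:ℝ)..(t / ε), -|m| ≤ ∫ s in (0:ℝ)..(t / ε), ℓ (ξ s) (η s) (α s) :=
      intervalIntegral.integral_mono_on htε (by simp) hint
        (fun s hs => hlow _ _ _ (hslow hα hT h0 s hs.1 hs.2) (hα.2 s))
    rw [intervalIntegral.integral_const, sub_zero, smul_eq_mul] at h1
    have h2 := mul_le_mul_of_nonneg_left h1 hε.le
    have h3 : ε * (t / ε * -|m|) = -(t * |m|) := by field_simp
    have h4 := hu0Bdd (ξ (t / ε)) (η (t / ε))
    have h5 := mul_le_mul_of_nonneg_right htR (abs_nonneg m)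
    linarith
  -- construction of a good trajectory
  obtain ⟨a0, ha0⟩ := hAne
  let pol : Euc N × Euc M → Euc k := fun z =>
    if h : z ∈ closedBall (0 : Euc N) Rx ×ˢ closedBall (0 : Euc M) R1 then (hG z h).choose else a0
  have hpol : ∀ z, pol z ∈ A := by
    intro z
    simp only [pol]
    split_ifs with h
    · exact (hG z h).choose_spec.1
    · exact ha0
  have hpol2 : ∀ z ∈ closedBall (0 : Euc N) Rx ×ˢ closedBall (0 : Euc M) R1,
      (1 ≤ ‖z.2‖ → ⟪g z.1 z.2 (pol z), z.2⟫ ≤ -(r / 2) * ‖z.2‖) ∧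
      ‖g z.1 z.2 (pol z)‖ ≤ G := by
    intro z h
    have e : pol z = (hG z h).choose := by simp only [pol]; rw [dif_pos h]
    rw [e]
    exact (hG z h).choose_spec.2
  clear_value pol
  have hG0 : 0 ≤ G := by
    have hmem : ((0, 0) : Euc N × Euc M) ∈ closedBall (0 : Euc N) Rx ×ˢ closedBall (0 : Euc M) R1 :=
      ⟨mem_closedBall_self (by positivity), mem_closedBall_self (by linarith)⟩
    exact (norm_nonneg _).trans (hpol2 _ hmem).2
  set c : ℝ := r / 2 with hc
  have hc0 : 0 < c := by positivity
  set Gε : ℝ := ε * Q0 + G with hGε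
  have hGε0 : 0 < Gε := by positivity
  set D : ℝ := 4 * L0 * (1 + ε) + 2 * Gε + 8 * L0 * Gε / c + G ^ 2 / c + c with hD
  have p1 : 0 < 4 * L0 * (1 + ε) := by positivity
  have p2 : 0 < 8 * L0 * Gε / c := by positivity
  have p3 : 0 ≤ G ^ 2 / c := by positivity
  have hD0 : 0 < D := by positivity
  obtain ⟨δ, hδ⟩ : ∃ δ : ℝ, δ = 1 / D := ⟨_, rfl⟩
  have hδ0 : 0 < δ := by rw [hδ]; positivity
  have hsm : ∀ X, X ≤ D → X * δ ≤ 1 := by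
    intro X hX
    rw [hδ, mul_one_div, div_le_one hD0]
    exact hX
  have q1 : 4 * L0 * (1 + ε) * δ ≤ 1 := hsm _ (by linarith)
  have q2 : 2 * Gε * δ ≤ 1 := hsm _ (by linarith)
  have q3 : 8 * L0 * Gε * δ ≤ c := by
    have := hsm (8 * L0 * Gε / c) (by linarith)
    rw [div_mul_eq_mul_div, div_le_one hc0] at this
    exact this
  have q4 : G ^ 2 * δ ≤ c := by
    have := hsm (G ^ 2 / c) (by linarith)
    rw [div_mul_eq_mul_div, div_le_one hc0] at this
    exact this
  have q5 : c * δ ≤ 2 := (hsm c (by linarith)).trans (by norm_num)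
  obtain ⟨α, ξ, η, zs, hα, hT, hξ0, hη0, hint, hzs0, hξn, hη, hz1, hz2⟩ :=
    aux_traj hL0 hfLip hgLip hε hδ0 q1 pol hpol (x, y) ℓ hlCont
  have hF : ∀ z ∈ closedBall (0 : Euc N) Rx ×ˢ closedBall (0 : Euc M) R1,
      2 * δ * ‖((ε • f z.1 z.2 (pol z), g z.1 z.2 (pol z)) : Euc N × Euc M)‖ ≤ 2 * δ * Gε := by
    intro z h
    have : ‖((ε • f z.1 z.2 (pol z), g z.1 z.2 (pol z)) : Euc N × Euc M)‖ ≤ Gε := by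
      refine max_le ?_ ?_
      · simp only [norm_smul, Real.norm_of_nonneg hε.le]
        have := mul_le_mul_of_nonneg_left (hfBdd z.1 z.2 _ (hpol z)) hε.le
        linarith
      · have := (hpol2 z h).2
        have : 0 ≤ ε * Q0 := by positivity
        simp only
        linarith
    gcongr
  have hzK : ∀ n : ℕ, n * δ ≤ t / ε →
      zs n ∈ closedBall (0 : Euc N) Rx ×ˢ closedBall (0 : Euc M) R1 := by
    intro n
    induction n with
    | zero =>
      intro _
      rw [hzs0]
      have : 0 ≤ Q0 * R := by positivity
      exact ⟨by simp only [mem_closedBall_zero_iff]; linarith,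
        by simp only [mem_closedBall_zero_iff]; linarith⟩
    | succ n ih =>
      intro hn
      have hn' : (n : ℝ) * δ ≤ t / ε := by push_cast at hn; nlinarith
      have hk := ih hn'
      refine ⟨?_, ?_⟩
      · rw [mem_closedBall_zero_iff, ← hξn]
        exact hslow hα hT hξ0 _ (by positivity) hn
      · rw [mem_closedBall_zero_iff]
        have hyk : ‖(zs n).2‖ ≤ R1 := by
          have := hk.2
          rwa [mem_closedBall_zero_iff] at this
        have hFn := hF _ hk
        by_cases h1 : 1 ≤ ‖(zs n).2‖
        · refine (aux_decrease hδ0 hc0 h1 ((hpol2 _ hk).1 h1) (hpol2 _ hk).2 q4 q5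
            ((hz2 n).trans ?_)).trans hyk
          refine mul_le_mul_of_nonneg_left ?_ hδ0.le
          have := mul_le_mul_of_nonneg_left hFn hL0.le
          linarith
        · have h2 := hz1 n
          have h3 := norm_le_norm_add_norm_sub' (zs (n + 1)).2 (zs n).2
          linarith
  have hηb : ∀ s, 0 ≤ s → s ≤ t / ε → ‖η s‖ ≤ R1 + 1 := by
    intro s hs hst
    have h1 : (⌊s / δ⌋₊ : ℝ) * δ ≤ s := by
      rw [← le_div_iff₀ hδ0]; exact Nat.floor_le (by positivity)
    have hk := hzK ⌊s / δ⌋₊ (h1.trans hst)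
    have hyk : ‖(zs ⌊s / δ⌋₊).2‖ ≤ R1 := by
      have := hk.2
      rwa [mem_closedBall_zero_iff] at this
    have h2 := hη s
    have h3 := hF _ hk
    have h4 := norm_le_norm_add_norm_sub' (η s) (zs ⌊s / δ⌋₊).2
    linarith
  have hξb := hslow hα hT hξ0
  have hmemS : ε * (∫ s in (0:ℝ)..(t / ε), ℓ (ξ s) (η s) (α s)) + u0 (ξ (t / ε)) (η (t / ε)) ∈
      { v : ℝ | ∃ (α : ℝ → Euc k) (ξ : ℝ → Euc N) (η : ℝ → Euc M),
      IsControl A α ∧ IsTrajectory f g ε α ξ η ∧ ξ 0 = x ∧ η 0 = y ∧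
      IntervalIntegrable (fun s => ℓ (ξ s) (η s) (α s)) volume 0 (t / ε) ∧
      v = ε * (∫ s in (0:ℝ)..(t / ε), ℓ (ξ s) (η s) (α s)) + u0 (ξ (t / ε)) (η (t / ε)) } :=
    ⟨α, ξ, η, hα, hT, hξ0, hη0, hint _ htε, rfl⟩
  have hub : ε * (∫ s in (0:ℝ)..(t / ε), ℓ (ξ s) (η s) (α s)) + u0 (ξ (t / ε)) (η (t / ε)) ≤
      R * |Bl| + Bu := by
    have h1 : ∫ s in (0:ℝ)..(t / ε), ℓ (ξ s) (η s) (α s) ≤ ∫ s in (0:ℝ)..(t / ε), |Bl| :=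
      intervalIntegral.integral_mono_on htε (hint _ htε) (by simp)
        (fun s hs => by
          have := hBl (ξ s, η s, α s) ⟨by simpa using hξb s hs.1 hs.2,
            by simpa using hηb s hs.1 hs.2, hα.2 s⟩
          exact (le_abs_self _).trans (this.trans (le_abs_self _)))
    rw [intervalIntegral.integral_const, sub_zero, smul_eq_mul] at h1
    have h2 := mul_le_mul_of_nonneg_left h1 hε.le
    have h3 : ε * (t / ε * |Bl|) = t * |Bl| := by field_simp
    have h4 := hBu (ξ (t / ε), η (t / ε)) ⟨by simpa using hξb _ htε le_rfl,
      by simpa using hηb _ htε le_rfl⟩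
    have h4' := (le_abs_self _).trans h4
    have h5 := mul_le_mul_of_nonneg_right htR (abs_nonneg Bl)
    simp only at h4'
    linarith
  rw [abs_le]
  constructor
  · refine le_trans (neg_le_neg (le_max_right _ _)) ?_
    exact le_csInf ⟨_, hmemS⟩ hLB
  · refine le_trans ?_ (le_max_left _ _)
    exact (csInf_le ⟨_, hLB⟩ hmemS).trans hub
end
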